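/- arXiv:1810.03566 — 2 statements merged into one kernel-verified Lean document; each statement's English description precedes it below -/
import Mathlib

section
/- Let G be a connected and simply connected solvable Lie group with Lie algebra 𝔤, let 𝔴 be a Cartan subalgebra of 𝔤, let W be the connected Lie subgroup of G corresponding to 𝔴, and let N be the connected Lie subgroup of G corresponding to 𝔫 = [𝔤, 𝔤]. Then W and N are simply connected, and G = WN (every element of G is a product of an element of W and an element of N). -/
open Manifold

noncomputable section

/-- `ψ : ℝ → G` is a (smooth) one-parameter subgroup with direction `v` in the tangent
space at the identity. -/
def IsOneParamSubgroup {E : Type*} [NormedAddCommGroup E] [NormedSpace ℝ E]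
    {G : Type*} [TopologicalSpace G] [ChartedSpace E G] [Group G]
    (ψ : ℝ → G) (v : E) : Prop :=
  ψ 0 = 1 ∧ (∀ s t : ℝ, ψ (s + t) = ψ s * ψ t) ∧
  ContMDiff 𝓘(ℝ, ℝ) 𝓘(ℝ, E) (⊤ : ℕ∞) ψ ∧
  (mfderiv 𝓘(ℝ, ℝ) 𝓘(ℝ, E) ψ 0 (1 : ℝ) : E) = v

/-- The adjoint action of `g` on the tangent space at the identity: the differential of
conjugation by `g` at the identity. -/
def AdMap {E : Type*} [NormedAddCommGroup E] [NormedSpace ℝ E]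
    {G : Type*} [TopologicalSpace G] [ChartedSpace E G] [Group G]
    (g : G) (w : E) : E :=
  (mfderiv 𝓘(ℝ, E) 𝓘(ℝ, E) (fun x : G => g * x * g⁻¹) (1 : G) w : E)

/-- The connected (integral) subgroup of `G` corresponding to a set `S` of Lie algebra
elements (via the identification `eq` of the Lie algebra with the tangent space at the
identity): the subgroup generated by the one-parameter subgroups with directions in
`S`. -/
def integralSubgroup {E : Type*} [NormedAddCommGroup E] [NormedSpace ℝ E]
    {G : Type*} [TopologicalSpace G] [ChartedSpace E G] [Group G]
    {L : Type*} [LieRing L] [LieAlgebra ℝ L] (eq : L ≃ₗ[ℝ] E) (S : Set L) : Subgroup G :=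
  Subgroup.closure {g : G | ∃ v ∈ S, ∃ ψ : ℝ → G, IsOneParamSubgroup ψ (eq v) ∧ ∃ t : ℝ, g = ψ t}

/-!
Choose a flag of subspaces of the Lie algebra `L` in which every subspace is an ideal of the next
one, passing through the derived series. Appending one factor `exp (t X)` per step of the flag gives
coordinates of the second kind `Φ : E → G`. Along such a `Φ`, curves in `G` are lifted by solving
for their logarithmic derivative one coordinate at a time, so each step is only a quadrature. Hence
`Φ` is a local homeomorphism with lifts of paths, that is, a covering map, and it is a homeomorphism
because `G` is simply connected.

If the vectors `X` are chosen in a subalgebra `H` whenever that is possible, then `Φ` maps the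
subspace `H` onto the integral subgroup of `H`, which is therefore contractible. By the Fitting
decomposition, `𝔴 + [L, L] = L`; hence a flag may also start at `[L, L]` and take all later vectors
`X` in `𝔴`, and surjectivity of the corresponding `Φ` shows that `G = N W`, that is, `G = W N`.
-/

open Set Filter Topology ContinuousLinearMap

section Velocity

variable {E : Type*} [NormedAddCommGroup E] [NormedSpace ℝ E]
  {G : Type*} [TopologicalSpace G] [ChartedSpace E G]

/-- The curve `c` passes through `1` at time `t` with velocity `v`. The tangent space at `1` is
identified with the model space `E` by the preferred chart at `1`. -/
def HasVelocityAtOne [One G] (c : ℝ → G) (v : E) (t : ℝ) : Prop :=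
  c t = 1 ∧ ContinuousAt c t ∧ HasDerivAt (fun s => chartAt E (1 : G) (c s)) v t

namespace HasVelocityAtOne

section One

variable [One G] {c : ℝ → G} {v w : E} {t : ℝ}

theorem unique (hv : HasVelocityAtOne c v t) (hw : HasVelocityAtOne c w t) : v = w :=
  hv.2.2.unique hw.2.2

theorem hasMFDerivAt (hc : HasVelocityAtOne c v t) :
    HasMFDerivAt 𝓘(ℝ, ℝ) 𝓘(ℝ, E) c t (toSpanSingleton ℝ v : ℝ →L[ℝ] E) := by
  obtain ⟨h1, hcont, hderiv⟩ := hc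
  refine ⟨hcont, ?_⟩
  rw [hasDerivAt_iff_hasFDerivAt, ← hasFDerivWithinAt_univ, ← range_id, ← h1] at hderiv
  exact hderiv

theorem of_hasMFDerivAt {c' : ℝ →L[ℝ] E} (h1 : c t = 1)
    (hc : HasMFDerivAt 𝓘(ℝ, ℝ) 𝓘(ℝ, E) c t c') : HasVelocityAtOne c (c' 1) t := by
  obtain ⟨hcont, hderiv⟩ := hc
  refine ⟨h1, hcont, ?_⟩
  rw [hasDerivAt_iff_hasFDerivAt, ← hasFDerivWithinAt_univ, ← range_id, ← h1,
    toSpanSingleton_apply_map_one]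
  exact hderiv

theorem map {F : G → G} {F' : E →L[ℝ] E} (hF1 : F 1 = 1)
    (hF : HasMFDerivAt 𝓘(ℝ, E) 𝓘(ℝ, E) F 1 F') (hc : HasVelocityAtOne c v t) :
    HasVelocityAtOne (fun s => F (c s)) (F' v) t := by
  have hF' : HasMFDerivAt 𝓘(ℝ, E) 𝓘(ℝ, E) F (c t) F' := hc.1.symm ▸ hF
  have h1 : F (c t) = 1 := by rw [hc.1, hF1]
  simpa [Function.comp_def] using
    of_hasMFDerivAt (c' := F' ∘SL toSpanSingleton ℝ v) h1 (hF'.comp t hc.hasMFDerivAt)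

theorem const (t : ℝ) : HasVelocityAtOne (fun _ => (1 : G)) (0 : E) t :=
  ⟨rfl, continuousAt_const, hasDerivAt_const t _⟩

theorem comp {s : ℝ → ℝ} {s' : ℝ} (hc : HasVelocityAtOne c v (s t)) (hs : HasDerivAt s s' t) :
    HasVelocityAtOne (fun u => c (s u)) (s' • v) t :=
  ⟨hc.1, hc.2.1.comp (f := s) hs.continuousAt, hc.2.2.scomp t hs⟩

theorem exists_curve (G : Type*) [TopologicalSpace G] [ChartedSpace E G] [One G] (v : E) :
    ∃ c : ℝ → G, HasVelocityAtOne c v 0 := by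
  set φ := chartAt E (1 : G)
  have hline : HasDerivAt (fun s : ℝ => φ 1 + s • v) v 0 := by
    simpa using ((hasDerivAt_id (0 : ℝ)).smul_const v).const_add (φ 1)
  have h1 : φ 1 ∈ φ.target := φ.map_source (mem_chart_source E 1)
  have htarget : ∀ᶠ s in 𝓝 (0 : ℝ), φ 1 + s • v ∈ φ.target :=
    hline.continuousAt.eventually_mem (φ.open_target.mem_nhds (by simpa using h1))
  refine ⟨fun s => φ.symm (φ 1 + s • v), by simp [φ], ?_, ?_⟩
  · exact ContinuousAt.comp (g := φ.symm) (φ.continuousAt_symm (by simpa using h1))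
      hline.continuousAt
  · exact hline.congr_of_eventuallyEq (htarget.mono fun s hs => φ.right_inv hs)

end One

variable [Group G] [LieGroup 𝓘(ℝ, E) 1 G] {c d : ℝ → G} {v w : E} {t : ℝ}

theorem mul (hc : HasVelocityAtOne c v t) (hd : HasVelocityAtOne d w t) :
    HasVelocityAtOne (fun s => c s * d s) (v + w) t := by
  obtain ⟨A, hA⟩ : ∃ A : E × E →L[ℝ] E, HasMFDerivAt (𝓘(ℝ, E).prod 𝓘(ℝ, E)) 𝓘(ℝ, E)
      (fun p : G × G => p.1 * p.2) (1, 1) A :=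
    ⟨_, ((contMDiff_mul 𝓘(ℝ, E) 1).mdifferentiable one_ne_zero _).hasMFDerivAt⟩
  have hmul {c d : ℝ → G} {v w : E} (hc : HasVelocityAtOne c v t) (hd : HasVelocityAtOne d w t) :
      HasVelocityAtOne (fun s => c s * d s) (A (v, w)) t := by
    have hA' : HasMFDerivAt (𝓘(ℝ, E).prod 𝓘(ℝ, E)) 𝓘(ℝ, E) (fun p : G × G => p.1 * p.2)
        (c t, d t) A := by rwa [hc.1, hd.1]
    have h1 : c t * d t = 1 := by rw [hc.1, hd.1, one_mul]
    simpa [Function.comp_def] using of_hasMFDerivAt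
      (c' := A ∘SL (toSpanSingleton ℝ v).prod (toSpanSingleton ℝ w)) h1
      (hA'.comp t (hc.hasMFDerivAt.prodMk hd.hasMFDerivAt))
  have hleft : A (v, 0) = v := unique (by simpa using hmul hc (const t)) hc
  have hright : A (0, w) = w := unique (by simpa using hmul (const t) hd) hd
  have hsum : A (v, w) = v + w := by rw [← Prod.fst_add_snd (v, w), map_add, hleft, hright]
  exact hsum ▸ hmul hc hd

theorem inv (hc : HasVelocityAtOne c v t) : HasVelocityAtOne (fun s => (c s)⁻¹) (-v) t := by
  have hinv := ((contMDiff_inv 𝓘(ℝ, E) 1 (G := G)).mdifferentiable one_ne_zero 1).hasMFDerivAt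
  have hc' := map inv_one hinv hc
  have hmul := hc.mul hc'
  simp only [mul_inv_cancel] at hmul
  rwa [neg_eq_of_add_eq_zero_right (hmul.unique (const t))]

end HasVelocityAtOne
end Velocity

section LogDeriv

variable {E : Type*} [NormedAddCommGroup E] [NormedSpace ℝ E]
  {G : Type*} [TopologicalSpace G] [ChartedSpace E G] [Group G]

/-- The curve `γ` in `G` has left logarithmic derivative `γ(t)⁻¹ γ'(t) = ξ` at time `t`. -/
def HasLogDerivAt (γ : ℝ → G) (ξ : E) (t : ℝ) : Prop :=
  HasVelocityAtOne (fun s => (γ t)⁻¹ * γ s) ξ t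

namespace HasLogDerivAt

theorem const (g : G) (t : ℝ) : HasLogDerivAt (fun _ => g) (0 : E) t := by
  simpa [HasLogDerivAt] using HasVelocityAtOne.const (E := E) (G := G) t

theorem const_mul {γ : ℝ → G} {ξ : E} {t : ℝ} (g : G) (hγ : HasLogDerivAt γ ξ t) :
    HasLogDerivAt (fun s => g * γ s) ξ t := by
  simpa [HasLogDerivAt, mul_assoc] using hγ

end HasLogDerivAt

variable [LieGroup 𝓘(ℝ, E) 1 G]

theorem HasVelocityAtOne.conj {c : ℝ → G} {v : E} {t : ℝ} (hc : HasVelocityAtOne c v t) (g : G) :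
    HasVelocityAtOne (fun s => g * c s * g⁻¹) (AdMap g v) t := by
  have hconj : ContMDiff 𝓘(ℝ, E) 𝓘(ℝ, E) 1 (fun x : G => g * x * g⁻¹) :=
    (contMDiff_const.mul contMDiff_id).mul contMDiff_const
  exact hc.map (F := fun x => g * x * g⁻¹) (by simp)
    (hconj.mdifferentiable one_ne_zero 1).hasMFDerivAt

/-- The adjoint representation of `G` on the tangent space at `1`, with `AdMap` as underlying
function. -/
def Ad : G →* (E →L[ℝ] E) where
  toFun g := mfderiv 𝓘(ℝ, E) 𝓘(ℝ, E) (fun x : G => g * x * g⁻¹) (1 : G)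
  map_one' := ContinuousLinearMap.ext fun v : E => by
    obtain ⟨c, hc⟩ := HasVelocityAtOne.exists_curve G v
    exact (hc.conj 1).unique (w := v) (by simpa using hc)
  map_mul' g h := ContinuousLinearMap.ext fun v : E => by
    obtain ⟨c, hc⟩ := HasVelocityAtOne.exists_curve G v
    exact (hc.conj (g * h)).unique (w := AdMap g (AdMap h v))
      (by simpa [mul_assoc] using (hc.conj h).conj g)

theorem Ad_apply (g : G) (v : E) : Ad g v = AdMap g v := rfl

theorem Ad_mul_apply (g h : G) (v : E) : Ad (g * h) v = Ad g (Ad h v) := by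
  rw [map_mul]; rfl

theorem Ad_one_apply (v : E) : Ad (1 : G) v = v := by
  rw [map_one]; rfl

namespace HasLogDerivAt

variable {γ δ : ℝ → G} {ξ η : E} {t : ℝ}

theorem mul (hγ : HasLogDerivAt γ ξ t) (hδ : HasLogDerivAt δ η t) :
    HasLogDerivAt (fun s => γ s * δ s) (Ad (δ t)⁻¹ ξ + η) t := by
  have h := (HasVelocityAtOne.conj hγ (δ t)⁻¹).mul hδ
  simpa [HasLogDerivAt, mul_assoc, Ad_apply] using h

theorem inv (hγ : HasLogDerivAt γ ξ t) : HasLogDerivAt (fun s => (γ s)⁻¹) (-Ad (γ t) ξ) t := by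
  have h := (HasVelocityAtOne.inv hγ).conj (γ t)
  rw [← Ad_apply, map_neg] at h
  simpa [HasLogDerivAt, mul_assoc] using h

theorem hasMFDerivAt_zero (hγ : HasLogDerivAt γ (0 : E) t) :
    HasMFDerivAt 𝓘(ℝ, ℝ) 𝓘(ℝ, E) γ t (0 : ℝ →L[ℝ] E) := by
  obtain ⟨A, hA⟩ : ∃ A : E →L[ℝ] E,
      HasMFDerivAt 𝓘(ℝ, E) 𝓘(ℝ, E) (γ t * ·) ((γ t)⁻¹ * γ t) A :=
    ⟨_, (contMDiff_mul_left.mdifferentiable one_ne_zero _).hasMFDerivAt⟩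
  have hA0 : A ∘SL toSpanSingleton ℝ (0 : E) = 0 := by simp
  have h : HasMFDerivAt 𝓘(ℝ, ℝ) 𝓘(ℝ, E) (fun s => γ t * ((γ t)⁻¹ * γ s)) t
      (A ∘SL toSpanSingleton ℝ (0 : E) : ℝ →L[ℝ] E) :=
    hA.comp t (HasVelocityAtOne.hasMFDerivAt hγ)
  have hγ' : (fun s => γ t * ((γ t)⁻¹ * γ s)) = γ := funext fun s => mul_inv_cancel_left _ _
  exact hγ' ▸ hA0 ▸ h

end HasLogDerivAt

theorem eq_of_hasMFDerivAt_zero {E : Type*} [NormedAddCommGroup E] [NormedSpace ℝ E]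
    {M : Type*} [TopologicalSpace M] [ChartedSpace E M] [IsManifold 𝓘(ℝ, E) 1 M]
    [T2Space M] {γ : ℝ → M}
    (hγ : ∀ t, HasMFDerivAt 𝓘(ℝ, ℝ) 𝓘(ℝ, E) γ t (0 : ℝ →L[ℝ] E)) (t t₀ : ℝ) : γ t = γ t₀ := by
  have hconst : γ = fun _ => γ t₀ := by
    refine isMIntegralCurve_Ioo_eq_of_contMDiff_boundaryless (I := 𝓘(ℝ, E))
      (v := fun _ => 0) (t₀ := t₀)
      (Bundle.contMDiff_zeroSection ℝ (TangentSpace 𝓘(ℝ, E) : M → Type _)) (fun t => ?_)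
      (isMIntegralCurve_const rfl) rfl
    rw [smulRight_one_eq_toSpanSingleton, toSpanSingleton_zero]
    exact hγ t
  exact congrFun hconst t

theorem HasLogDerivAt.eq_of_apply_eq {γ δ : ℝ → G} {ξ : ℝ → E}
    (hγ : ∀ t, HasLogDerivAt γ (ξ t) t) (hδ : ∀ t, HasLogDerivAt δ (ξ t) t) {t₀ : ℝ}
    (h₀ : γ t₀ = δ t₀) : γ = δ := by
  have : IsTopologicalGroup G := topologicalGroup_of_lieGroup 𝓘(ℝ, E) 1
  have : T1Space G := 𝓘(ℝ, E).t1Space G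
  have hzero : ∀ t, HasLogDerivAt (fun s => γ s * (δ s)⁻¹) (0 : E) t := fun t => by
    simpa using (hγ t).mul (hδ t).inv
  ext t
  have h := eq_of_hasMFDerivAt_zero (fun t => (hzero t).hasMFDerivAt_zero) t t₀
  rwa [h₀, mul_inv_cancel, mul_inv_eq_one] at h

theorem exists_continuous_hasLogDerivAt {γ : ℝ → G} (hγ : ContMDiff 𝓘(ℝ, ℝ) 𝓘(ℝ, E) 1 γ) :
    ∃ ξ : ℝ → E, Continuous ξ ∧ ∀ t, HasLogDerivAt γ (ξ t) t := by
  set K : ℝ × ℝ → E := fun q => chartAt E (1 : G) ((γ q.1)⁻¹ * γ q.2)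
  have hK : ∀ t, ContDiffAt ℝ 1 K (t, t) := fun t => by
    rw [← contMDiffAt_iff_contDiffAt]
    have hquot : ContMDiff 𝓘(ℝ, ℝ × ℝ) 𝓘(ℝ, E) 1 fun q : ℝ × ℝ => (γ q.1)⁻¹ * γ q.2 :=
      (hγ.comp contDiff_fst.contMDiff).inv.mul (hγ.comp contDiff_snd.contMDiff)
    have hchart : ContMDiffAt 𝓘(ℝ, E) 𝓘(ℝ, E) 1 (chartAt E (1 : G)) ((γ t)⁻¹ * γ t) := by
      rw [inv_mul_cancel]
      exact contMDiffAt_extChartAt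
    exact hchart.comp (t, t) hquot.contMDiffAt
  refine ⟨fun t => fderiv ℝ K (t, t) (0, 1), continuous_iff_continuousAt.2 fun t => ?_, fun t => ?_⟩
  · have hfderiv : ContinuousAt (fun t : ℝ => fderiv ℝ K (t, t)) t :=
      ((hK t).continuousAt_fderiv one_ne_zero).comp (f := fun t : ℝ => (t, t)) (by fun_prop)
    exact hfderiv.clm_apply continuousAt_const
  · have hline : HasDerivAt (fun s : ℝ => (t, s)) ((0 : ℝ), (1 : ℝ)) t :=
      (hasDerivAt_const t t).prodMk (hasDerivAt_id t)
    have : IsTopologicalGroup G := topologicalGroup_of_lieGroup 𝓘(ℝ, E) 1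
    exact ⟨inv_mul_cancel _, (hγ.continuous.const_mul _).continuousAt,
      ((hK t).differentiableAt one_ne_zero).hasFDerivAt.comp_hasDerivAt t hline⟩

end LogDeriv

namespace IsOneParamSubgroup

variable {E : Type*} [NormedAddCommGroup E] [NormedSpace ℝ E]
  {G : Type*} [TopologicalSpace G] [ChartedSpace E G] [Group G] {ψ : ℝ → G} {v : E}

theorem map_neg (hψ : IsOneParamSubgroup ψ v) (t : ℝ) : ψ (-t) = (ψ t)⁻¹ := by
  rw [← mul_eq_one_iff_eq_inv, ← hψ.2.1, neg_add_cancel, hψ.1]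

theorem contMDiff (hψ : IsOneParamSubgroup ψ v) : ContMDiff 𝓘(ℝ, ℝ) 𝓘(ℝ, E) 1 ψ :=
  hψ.2.2.1.of_le (mod_cast le_top)

theorem hasLogDerivAt_comp (hψ : IsOneParamSubgroup ψ v) {s : ℝ → ℝ} {s' t : ℝ}
    (hs : HasDerivAt s s' t) : HasLogDerivAt (fun u => ψ (s u)) (s' • v) t := by
  have h0 : HasVelocityAtOne ψ v 0 := by
    rw [← hψ.2.2.2]
    exact .of_hasMFDerivAt hψ.1 (hψ.contMDiff.mdifferentiable one_ne_zero 0).hasMFDerivAt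
  rw [← neg_add_cancel (s t)] at h0
  have h := h0.comp (s := fun u => -s t + s u) (hs.const_add (-s t))
  simpa only [HasLogDerivAt, hψ.2.1, hψ.map_neg] using h

end IsOneParamSubgroup

section AdInvariance

variable {E : Type*} [NormedAddCommGroup E] [NormedSpace ℝ E]

theorem mem_of_hasDerivAt_apply [FiniteDimensional ℝ E] (A : E →ₗ[ℝ] E) {V : Submodule ℝ E}
    (hA : ∀ y ∈ V, A y ∈ V) {u : ℝ → E} (hu : ∀ t, HasDerivAt u (A (u t)) t) {t₀ : ℝ}
    (h₀ : u t₀ ∈ V) (t : ℝ) : u t ∈ V := by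
  have : IsClosed (V : Set E) := V.closed_of_finiteDimensional
  set B : E ⧸ V →L[ℝ] E ⧸ V := (V.mapQ V A hA).toContinuousLinearMap
  have hquot : ∀ t, HasDerivAt (fun s => V.mkQ (u s)) (B (V.mkQ (u t))) t := fun t =>
    V.mkQ.toContinuousLinearMap.hasFDerivAt.comp_hasDerivAt t (hu t)
  have hzero : ∀ t, HasDerivAt (fun _ : ℝ => (0 : E ⧸ V)) (B 0) t := fun t => by
    simpa using hasDerivAt_const t (0 : E ⧸ V)
  have h := ODE_solution_unique_univ (v := fun _ => B) (s := fun _ => univ)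
    (fun _ => B.lipschitz.lipschitzOnWith) (fun t => ⟨hquot t, mem_univ _⟩)
    (fun t => ⟨hzero t, mem_univ _⟩) ((V.mkQ_apply (u t₀)).trans (by simpa using h₀))
  simpa using congrFun h t

variable {G : Type*} [TopologicalSpace G] [ChartedSpace E G] [Group G]
  {L : Type*} [LieRing L] [LieAlgebra ℝ L]

variable (G) in
/-- The linear identification `eq` of `L` with the tangent space of `G` at `1` carries the bracket
of `L` to the derivative of the adjoint action along one-parameter subgroups: it makes `L` the Lie
algebra of `G`. -/
def IsAdCompatible (eq : L ≃ₗ[ℝ] E) : Prop :=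
  ∀ (v w : L) (ψ : ℝ → G), IsOneParamSubgroup ψ (eq v) →
    HasDerivAt (fun t : ℝ => AdMap (ψ t) (eq w)) (eq ⁅v, w⁆) 0

namespace IsAdCompatible

variable [LieGroup 𝓘(ℝ, E) 1 G] {eq : L ≃ₗ[ℝ] E} {X : L} {ψ : ℝ → G}

theorem hasDerivAt_Ad (heq : IsAdCompatible G eq) (hψ : IsOneParamSubgroup ψ (eq X)) (w : E)
    (t : ℝ) : HasDerivAt (fun s => Ad (ψ s) w) (eq ⁅X, eq.symm (Ad (ψ t) w)⁆) t := by
  have h := heq X (eq.symm (Ad (ψ t) w)) ψ hψ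
  rw [← sub_self t] at h
  simpa only [eq.apply_symm_apply, ← Ad_apply, ← Ad_mul_apply, ← hψ.2.1, sub_add_cancel]
    using h.comp_sub_const t t

variable [FiniteDimensional ℝ E]

theorem continuous_Ad (heq : IsAdCompatible G eq) (hψ : IsOneParamSubgroup ψ (eq X)) :
    Continuous fun t => (Ad (ψ t) : E →L[ℝ] E) :=
  continuous_clm_apply.2 fun w => continuous_iff_continuousAt.2 fun t =>
    (heq.hasDerivAt_Ad hψ w t).continuousAt

theorem Ad_mem_map (heq : IsAdCompatible G eq) (hψ : IsOneParamSubgroup ψ (eq X))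
    {K : Submodule ℝ L} (hK : ∀ y ∈ K, ⁅X, y⁆ ∈ K) (t : ℝ) {v : E}
    (hv : v ∈ K.map (eq : L →ₗ[ℝ] E)) : Ad (ψ t) v ∈ K.map (eq : L →ₗ[ℝ] E) := by
  refine mem_of_hasDerivAt_apply (eq.conj (LieAlgebra.ad ℝ L X)) (u := fun t => Ad (ψ t) v)
    (t₀ := 0) ?_ (fun t => ?_) (by rwa [hψ.1, Ad_one_apply]) t
  · rintro _ ⟨y, hy, rfl⟩
    exact ⟨⁅X, y⁆, hK y hy, by simp⟩
  · simpa using heq.hasDerivAt_Ad hψ v t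

end IsAdCompatible

end AdInvariance

section LiftsLogDeriv

variable {E : Type*} [NormedAddCommGroup E] [NormedSpace ℝ E] {G : Type*} [Group G]

/-- Appends the factor `ψ` to the coordinate map `Φ`: the part of a vector along `X`, measured by
the functional `l` with `l X = 1`, is used as the parameter of `ψ`, and the remaining part is mapped
by `Φ`. -/
def appendFactor (Φ : E → G) (l : E →L[ℝ] ℝ) (X : E) (ψ : ℝ → G) (x : E) : G :=
  Φ (x - l x • X) * ψ (l x)

theorem appendFactor_of_apply_eq_zero (Φ : E → G) {l : E →L[ℝ] ℝ} (X : E) {ψ : ℝ → G}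
    (hψ : ψ 0 = 1) {x : E} (hx : l x = 0) : appendFactor Φ l X ψ x = Φ x := by
  simp [appendFactor, hx, hψ]

theorem appendFactor_add_smul (Φ : E → G) {l : E →L[ℝ] ℝ} {X : E} (ψ : ℝ → G) (hlX : l X = 1)
    {k : E} (hk : l k = 0) (c : ℝ) : appendFactor Φ l X ψ (k + c • X) = Φ k * ψ c := by
  simp [appendFactor, hk, hlX]

variable [TopologicalSpace G] [ChartedSpace E G]

/-- Every curve in `G` starting in the image of `K` under `Φ`, with prescribed left logarithmic
derivative in `K`, is the image under `Φ` of a differentiable curve in `K` with prescribed starting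
point. For `K` a subalgebra this says that `Φ` restricts to a chart of the second kind on the
integral subgroup of `K`. -/
def LiftsLogDeriv (Φ : E → G) (K : Submodule ℝ E) : Prop :=
  ∀ ξ : ℝ → E, Continuous ξ → (∀ t, ξ t ∈ K) → ∀ t₀, ∀ r ∈ K, ∃ x : ℝ → E,
    Differentiable ℝ x ∧ (∀ t, x t ∈ K) ∧ x t₀ = r ∧ ∀ t, HasLogDerivAt (fun s => Φ (x s)) (ξ t) t

theorem contMDiff_appendFactor [LieGroup 𝓘(ℝ, E) 1 G] {Φ : E → G}
    (hΦ : ContMDiff 𝓘(ℝ, E) 𝓘(ℝ, E) 1 Φ)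
    {l : E →L[ℝ] ℝ} {X : E} {ψ : ℝ → G} (hψ : ContMDiff 𝓘(ℝ, ℝ) 𝓘(ℝ, E) 1 ψ) :
    ContMDiff 𝓘(ℝ, E) 𝓘(ℝ, E) 1 (appendFactor Φ l X ψ) :=
  (hΦ.comp (contDiff_id.sub (l.contDiff.smul contDiff_const)).contMDiff).mul
    (hψ.comp l.contDiff.contMDiff)

namespace LiftsLogDeriv

theorem one_bot : LiftsLogDeriv (fun _ : E => (1 : G)) ⊥ := by
  intro ξ _ hξ _ r hr
  refine ⟨fun _ => r, differentiable_const r, fun _ => hr, rfl, fun t => ?_⟩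
  rw [(Submodule.mem_bot ℝ).1 (hξ t)]
  exact .const 1 t

theorem congr {Φ Φ' : E → G} {K : Submodule ℝ E} (h : LiftsLogDeriv Φ K)
    (heq : ∀ x ∈ K, Φ' x = Φ x) : LiftsLogDeriv Φ' K := by
  intro ξ hξ hξK t₀ r hr
  obtain ⟨x, hx, hxK, hx₀, hlog⟩ := h ξ hξ hξK t₀ r hr
  exact ⟨x, hx, hxK, hx₀, by simpa only [heq _ (hxK _)] using hlog⟩

theorem appendFactor_sup_span [LieGroup 𝓘(ℝ, E) 1 G] {Φ : E → G}
    {K : Submodule ℝ E} (h : LiftsLogDeriv Φ K) {l : E →L[ℝ] ℝ} {X : E} (hlX : l X = 1)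
    (hlK : ∀ v ∈ K, l v = 0) {ψ : ℝ → G} (hψ : IsOneParamSubgroup ψ X)
    (hAd : ∀ t, ∀ v ∈ K, Ad (ψ t) v ∈ K)
    (hcont : Continuous fun t => (Ad (ψ t) : E →L[ℝ] E)) :
    LiftsLogDeriv (appendFactor Φ l X ψ) (K ⊔ Submodule.span ℝ {X}) := by
  have hproj : ∀ v ∈ K ⊔ Submodule.span ℝ {X}, v - l v • X ∈ K := fun v hv => by
    obtain ⟨k, hk, _, hy, rfl⟩ := Submodule.mem_sup.1 hv
    obtain ⟨c, rfl⟩ := Submodule.mem_span_singleton.1 hy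
    simpa [hlX, hlK k hk] using hk
  intro ξ hξ hξK t₀ r hr
  have hlξ : Continuous fun t => l (ξ t) := l.continuous.comp hξ
  set s : ℝ → ℝ := fun t => l r + ∫ u in t₀..t, l (ξ u) with hs
  have hs' : ∀ t, HasDerivAt s (l (ξ t)) t := fun t =>
    (hlξ.integral_hasStrictDerivAt t₀ t).hasDerivAt.const_add _
  have hsdiff : Differentiable ℝ s := fun t => (hs' t).differentiableAt
  -- Multiplying by `ψ (s t)` on the right turns the logarithmic derivative `Ad (ψ (s t)) η` into
  -- `η + s' • X`.
  obtain ⟨y, hy, hyK, hy₀, hylog⟩ := h (fun t => Ad (ψ (s t)) (ξ t - l (ξ t) • X))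
    ((hcont.comp hsdiff.continuous).clm_apply (hξ.sub (hlξ.smul continuous_const)))
    (fun t => hAd _ _ (hproj _ (hξK t))) t₀ _ (hproj r hr)
  refine ⟨fun t => y t + s t • X, hy.add (hsdiff.smul_const X), fun t => ?_, ?_, fun t => ?_⟩
  · exact Submodule.add_mem_sup (hyK t)
      (Submodule.smul_mem _ _ (Submodule.mem_span_singleton_self X))
  · simp [hy₀, hs]
  · have hlog := (hylog t).mul (hψ.hasLogDerivAt_comp (hs' t))
    simpa [appendFactor_add_smul Φ ψ hlX (hlK _ (hyK _)), ← Ad_mul_apply, Ad_one_apply] using hlog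

variable [LieGroup 𝓘(ℝ, E) 1 G] {Φ : E → G} {K : Submodule ℝ E}

theorem exists_mul_eq (h : LiftsLogDeriv Φ K) {X : E} (hX : X ∈ K) {ψ : ℝ → G}
    (hψ : IsOneParamSubgroup ψ X) {r : E} (hr : r ∈ K) (t : ℝ) : ∃ r' ∈ K, Φ r' = Φ r * ψ t := by
  obtain ⟨x, -, hxK, hx₀, hlog⟩ := h (fun _ => X) continuous_const (fun _ => hX) 0 r hr
  have hψlog : ∀ t, HasLogDerivAt (fun s => Φ r * ψ s) X t := fun t => by
    simpa using (hψ.hasLogDerivAt_comp (hasDerivAt_id t)).const_mul (Φ r)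
  exact ⟨x t, hxK t, congrFun (HasLogDerivAt.eq_of_apply_eq hlog hψlog (t₀ := 0)
    (by simp [hx₀, hψ.1])) t⟩

theorem integralSubgroup_subset_image {L : Type*} [LieRing L] [LieAlgebra ℝ L] {eq : L ≃ₗ[ℝ] E}
    (h : LiftsLogDeriv Φ K) (h₀ : Φ 0 = 1) {S : Set L} (hS : ∀ v ∈ S, eq v ∈ K) :
    ((integralSubgroup eq S : Subgroup G) : Set G) ⊆ Φ '' K := by
  intro g hg
  induction hg using Subgroup.closure_induction_right with
  | one => exact ⟨0, K.zero_mem, h₀⟩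
  | mul_right g _ _ hy ih =>
    obtain ⟨r, hr, rfl⟩ := ih
    obtain ⟨v, hv, ψ, hψ, t, rfl⟩ := hy
    exact h.exists_mul_eq (hS v hv) hψ hr t
  | mul_inv_cancel g _ _ hy ih =>
    obtain ⟨r, hr, rfl⟩ := ih
    obtain ⟨v, hv, ψ, hψ, t, rfl⟩ := hy
    rw [← hψ.map_neg]
    exact h.exists_mul_eq (hS v hv) hψ hr (-t)

end LiftsLogDeriv

end LiftsLogDeriv

section Covering

variable {Y X : Type*} [TopologicalSpace Y] [TopologicalSpace X] {p : Y → X}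

theorem eq_of_sections_apply_eq (hp : IsLocalHomeomorph p) (hsep : IsSeparatedMap p) {U : Set X}
    (hconn : IsPreconnected U) {s s' : U → Y} (hs : Continuous s) (hps : ∀ u, p (s u) = u)
    (hs' : Continuous s') (hps' : ∀ u, p (s' u) = u) {u : U} (hu : s u = s' u) : s = s' :=
  have : PreconnectedSpace U := isPreconnected_iff_preconnectedSpace.1 hconn
  hsep.eq_of_comp_eq hp.isLocallyInjective hs hs'
    (funext fun v => (hps v).trans (hps' v).symm) u hu

theorem isEvenlyCovered_of_exists_section (hp : IsLocalHomeomorph p) (hsep : IsSeparatedMap p)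
    {U : Set X} (hU : IsOpen U) (hconn : IsPreconnected U) {x : X} (hx : x ∈ U)
    (hsec : ∀ y, p y ∈ U → ∃ s : U → Y, Continuous s ∧ (∀ u, p (s u) = u) ∧ ∃ u, s u = y) :
    IsEvenlyCovered p x (p ⁻¹' {x}) := by
  have hsec' : ∀ y : p ⁻¹' {x}, ∃ s : U → Y, Continuous s ∧ (∀ u, p (s u) = u) ∧ s ⟨x, hx⟩ = y := by
    rintro ⟨y, rfl : p y = x⟩
    obtain ⟨s, hs, hps, u, rfl⟩ := hsec y hx
    exact ⟨s, hs, hps, congrArg s (Subtype.ext (hps u))⟩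
  choose s hs hps hsx using hsec'
  have hdiscrete : DiscreteTopology (p ⁻¹' {x}) :=
    (IsDiscrete.of_openPartialHomeomorph p subset_rfl fun y _ =>
      (hp y).imp fun _ h => ⟨h.1, h.2.symm⟩).1
  set Ψ : U × p ⁻¹' {x} → p ⁻¹' U := fun q => ⟨s q.2 q.1, by simp [hps]⟩
  have hcont : Continuous Ψ := (continuous_prod_of_discrete_right.2 fun y => hs y).subtype_mk _
  have hopen : IsOpenMap Ψ := by
    refine IsOpenMap.subtype_mk (isOpenMap_prod_of_discrete_right.2 fun y => ?_) _
    have hval : p ∘ s y = Subtype.val := funext (hps y)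
    exact (hp.isOpenEmbedding_of_comp (hval ▸ hU.isOpenEmbedding_subtypeVal) (hs y)).isOpenMap
  have hinj : Function.Injective Ψ := by
    rintro ⟨u, y⟩ ⟨v, z⟩ h
    have h' : s y u = s z v := congrArg Subtype.val h
    obtain rfl : u = v := Subtype.ext (by rw [← hps y u, h', hps])
    have hyz := eq_of_sections_apply_eq hp hsep hconn (hs y) (hps y) (hs z) (hps z) h'
    exact Prod.ext rfl (Subtype.ext (by rw [← hsx y, hyz, hsx]))
  have hsurj : Function.Surjective Ψ := by
    rintro ⟨y, hy⟩
    obtain ⟨σ, hσ, hpσ, u, rfl⟩ := hsec y hy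
    have hσs : s ⟨σ ⟨x, hx⟩, hpσ _⟩ = σ :=
      eq_of_sections_apply_eq hp hsep hconn (hs _) (hps _) hσ hpσ (hsx _)
    exact ⟨(u, _), Subtype.ext (congrFun hσs u)⟩
  set H := (Equiv.ofBijective Ψ ⟨hinj, hsurj⟩).toHomeomorphOfContinuousOpen hcont hopen
  refine ⟨hdiscrete, U, hx, hU, hU.preimage hp.continuous, H.symm, fun y => ?_⟩
  obtain ⟨q, rfl⟩ := H.surjective y
  rw [H.symm_apply_apply]
  exact (hps q.2 q.1).symm

theorem exists_section_of_path_lifts (hp : IsLocalHomeomorph p) (hsep : IsSeparatedMap p)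
    {U : Set X} {y : Y} (hy : p y ∈ U) (c : C(unitInterval × U, X)) (hc₁ : ∀ u, c (1, u) = u)
    (hc : ∀ t, c (t, ⟨p y, hy⟩) = p y)
    (hlift : ∀ u, ∃ γ : unitInterval → Y, Continuous γ ∧ γ 0 = y ∧ ∀ t, p (γ t) = c (t, u)) :
    ∃ s : U → Y, Continuous s ∧ (∀ u, p (s u) = u) ∧ ∃ u, s u = y := by
  choose γ hγ hγ₀ hpγ using hlift
  have hcont : Continuous fun q : unitInterval × U => γ q.2 q.1 :=
    hp.continuous_lift hsep c (funext fun q => hpγ q.2 q.1) (by simpa [hγ₀] using continuous_const)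
      hγ
  have hconst : γ ⟨p y, hy⟩ = fun _ => y :=
    hsep.eq_of_comp_eq hp.isLocallyInjective (hγ _) continuous_const
      (funext fun t => (hpγ _ t).trans (hc t)) 0 (hγ₀ _)
  exact ⟨fun u => γ u 1, hcont.comp (by fun_prop : Continuous fun u : U => ((1 : unitInterval), u)),
    fun u => (hpγ u 1).trans (hc₁ u), ⟨p y, hy⟩, congrFun hconst 1⟩

theorem isHomeomorph_of_isCoveringMap [Nonempty Y] [PreconnectedSpace Y] [SimplyConnectedSpace X]
    [LocallyPathConnectedSpace X] (hp : IsCoveringMap p) : IsHomeomorph p := by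
  obtain ⟨y⟩ := ‹Nonempty Y›
  obtain ⟨F, ⟨hFy, hF⟩, -⟩ := hp.existsUnique_continuousMap_lifts (.id X) (p y) y rfl
  have hFp : F ∘ p = id := hp.eq_of_comp_eq (F.continuous.comp hp.continuous) continuous_id
    (by rw [← Function.comp_assoc, hF]; rfl) y hFy
  exact ⟨hp.continuous, hp.isOpenMap, Function.LeftInverse.injective (congrFun hFp),
    Function.RightInverse.surjective (congrFun hF)⟩

end Covering

section Manifold

variable {E : Type*} [NormedAddCommGroup E] [NormedSpace ℝ E]
  {M : Type*} [TopologicalSpace M] [ChartedSpace E M]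

variable (E) in
theorem exists_contraction_of_isManifold [IsManifold 𝓘(ℝ, E) 1 M] (x : M) :
    ∃ U : Set M, IsOpen U ∧ IsPreconnected U ∧ x ∈ U ∧
      ∀ z ∈ U, ∃ c : ℝ × U → M, Continuous c ∧
        (∀ u, ContMDiff 𝓘(ℝ, ℝ) 𝓘(ℝ, E) 1 fun t => c (t, u)) ∧
        ∀ u, c (0, u) = z ∧ c (1, u) = u ∧ ∀ t, (u : M) = z → c (t, u) = z := by
  set φ := chartAt E x
  have hx : x ∈ φ.source := mem_chart_source E x
  obtain ⟨ε, hε, hball⟩ := Metric.isOpen_iff.1 φ.open_target (φ x) (φ.map_source hx)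
  set B := Metric.ball (φ x) ε
  have hsymm : ContinuousOn φ.symm B := φ.symm.continuousOn.mono hball
  refine ⟨φ.symm '' B, φ.isOpen_image_symm_of_subset_target Metric.isOpen_ball hball,
    (convex_ball _ _).isPreconnected.image _ hsymm,
    ⟨φ x, Metric.mem_ball_self hε, φ.left_inv hx⟩, ?_⟩
  rintro _ ⟨a, ha, rfl⟩
  have hmem : ∀ u : φ.symm '' B, φ u ∈ B ∧ φ.symm (φ u) = u := by
    rintro ⟨_, b, hb, rfl⟩
    rw [φ.right_inv (hball hb)]
    exact ⟨hb, rfl⟩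
  have hcont : Continuous fun u : φ.symm '' B => φ u := continuousOn_iff_continuous_domRestrict.1
    (φ.continuousOn.mono (image_subset_iff.2 fun b hb => φ.map_target (hball hb)))
  set l : ℝ × φ.symm '' B → E := fun q => a + Real.smoothTransition q.1 • (φ q.2 - a)
  have hl : ∀ q, l q ∈ B := fun q => (convex_ball _ _).add_smul_sub_mem ha (hmem q.2).1
    ⟨Real.smoothTransition.nonneg q.1, Real.smoothTransition.le_one q.1⟩
  refine ⟨fun q => φ.symm (l q), hsymm.comp_continuous ?_ hl, fun u t => ?_, fun u => ⟨?_, ?_, ?_⟩⟩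
  · exact continuous_const.add ((Real.smoothTransition.continuous.comp continuous_fst).smul
      ((hcont.comp continuous_snd).sub continuous_const))
  · have hline : ContDiff ℝ 1 fun t => a + Real.smoothTransition t • (φ u - a) :=
      contDiff_const.add (Real.smoothTransition.contDiff.smul contDiff_const)
    exact ((contMDiffOn_chart_symm (I := 𝓘(ℝ, E))).contMDiffAt
      (φ.open_target.mem_nhds (hball (hl (t, u))))).comp t hline.contMDiff.contMDiffAt
  · simp [l]
  · simp [l, (hmem u).2]
  · intro t hu
    simp [l, hu, φ.right_inv (hball ha)]

theorem exists_openPartialHomeomorph_of_hasMFDerivAt {F : Type*} [NormedAddCommGroup F]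
    [NormedSpace ℝ F] [CompleteSpace F] {f : F → M} (hf : ContMDiff 𝓘(ℝ, F) 𝓘(ℝ, E) 1 f) {r : F}
    (f' : F ≃L[ℝ] E) (hf' : HasMFDerivAt 𝓘(ℝ, F) 𝓘(ℝ, E) f r (f' : F →L[ℝ] E)) :
    ∃ e : OpenPartialHomeomorph F M, r ∈ e.source ∧ EqOn f e e.source := by
  set φ := chartAt E (f r)
  have hr : f r ∈ φ.source := mem_chart_source E (f r)
  have hφf : ContDiffAt ℝ 1 (φ ∘ f) r := by
    rw [← contMDiffAt_iff_contDiffAt]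
    exact (contMDiffAt_extChartAt (I := 𝓘(ℝ, E))).comp r hf.contMDiffAt
  have hφf' : HasFDerivAt (φ ∘ f) (f' : F →L[ℝ] E) r := by
    rw [← hasFDerivWithinAt_univ, ← range_id]
    exact hf'.2
  set e := hφf.toOpenPartialHomeomorph (φ ∘ f) hφf' one_ne_zero
  have he : ⇑e = φ ∘ f := hφf.toOpenPartialHomeomorph_coe hφf' one_ne_zero
  have hre : r ∈ e.source := hφf.mem_toOpenPartialHomeomorph_source hφf' one_ne_zero
  set e' := e.restrOpen _ (φ.open_source.preimage hf.continuous)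
  refine ⟨e'.trans φ.symm, ⟨⟨hre, hr⟩, ?_⟩, ?_⟩
  · change e r ∈ φ.target
    rw [he]
    exact φ.map_source hr
  · intro y hy
    have hy' : f y ∈ φ.source := hy.1.2
    change f y = φ.symm (e y)
    rw [he, Function.comp_apply, φ.left_inv hy']

end Manifold

namespace LiftsLogDeriv

variable {E : Type*} [NormedAddCommGroup E] [NormedSpace ℝ E]
  {G : Type*} [TopologicalSpace G] [ChartedSpace E G] [Group G] {Φ : E → G}

theorem surjective_of_hasMFDerivAt (h : LiftsLogDeriv Φ ⊤) {r : E} {F' : E →L[ℝ] E}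
    (hF : HasMFDerivAt 𝓘(ℝ, E) 𝓘(ℝ, E) (fun y => (Φ r)⁻¹ * Φ y) r F') :
    Function.Surjective F' := by
  intro v
  obtain ⟨x, hx, -, rfl, hlog⟩ := h (fun _ => v) continuous_const (fun _ => trivial) 0 r trivial
  have hderiv := hF.comp 0 (hx 0).hasFDerivAt.hasMFDerivAt
  have hv := hasMFDerivAt_unique hderiv (hlog 0).hasMFDerivAt
  exact ⟨fderiv ℝ x 0 1, (congrArg (fun A : ℝ →L[ℝ] E => A 1) hv).trans (one_smul ℝ v)⟩

variable [LieGroup 𝓘(ℝ, E) 1 G]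

theorem exists_lift (h : LiftsLogDeriv Φ ⊤) {γ : ℝ → G}
    (hγ : ContMDiff 𝓘(ℝ, ℝ) 𝓘(ℝ, E) 1 γ) {t₀ : ℝ} {r : E} (hr : Φ r = γ t₀) :
    ∃ x : ℝ → E, Continuous x ∧ x t₀ = r ∧ ∀ t, Φ (x t) = γ t := by
  obtain ⟨ξ, hξ, hγξ⟩ := exists_continuous_hasLogDerivAt hγ
  obtain ⟨x, hx, -, rfl, hlog⟩ := h ξ hξ (fun _ => trivial) t₀ r trivial
  exact ⟨x, hx.continuous, rfl, fun t => congrFun (HasLogDerivAt.eq_of_apply_eq hlog hγξ hr) t⟩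

variable [FiniteDimensional ℝ E]

theorem isLocalHomeomorph (h : LiftsLogDeriv Φ ⊤) (hΦ : ContMDiff 𝓘(ℝ, E) 𝓘(ℝ, E) 1 Φ) :
    IsLocalHomeomorph Φ := by
  have : IsTopologicalGroup G := topologicalGroup_of_lieGroup 𝓘(ℝ, E) 1
  refine .mk Φ fun r => ?_
  have hF : ContMDiff 𝓘(ℝ, E) 𝓘(ℝ, E) 1 fun y => (Φ r)⁻¹ * Φ y := contMDiff_const.mul hΦ
  obtain ⟨F', hF'⟩ : ∃ F' : E →L[ℝ] E,
      HasMFDerivAt 𝓘(ℝ, E) 𝓘(ℝ, E) (fun y => (Φ r)⁻¹ * Φ y) r F' :=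
    ⟨_, (hF.mdifferentiable one_ne_zero r).hasMFDerivAt⟩
  have hsurj : Function.Surjective (F' : E →ₗ[ℝ] E) := h.surjective_of_hasMFDerivAt hF'
  set A : E ≃L[ℝ] E := (LinearEquiv.ofBijective (F' : E →ₗ[ℝ] E)
    ⟨LinearMap.injective_iff_surjective.2 hsurj, hsurj⟩).toContinuousLinearEquiv
  obtain ⟨e, hre, he⟩ := exists_openPartialHomeomorph_of_hasMFDerivAt hF A hF'
  refine ⟨e.trans (Homeomorph.mulLeft (Φ r)).toOpenPartialHomeomorph, ⟨hre, trivial⟩,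
    fun y hy => ?_⟩
  change Φ y = Φ r * e y
  rw [← he hy.1, mul_inv_cancel_left]

theorem isCoveringMap (h : LiftsLogDeriv Φ ⊤) (hΦ : ContMDiff 𝓘(ℝ, E) 𝓘(ℝ, E) 1 Φ) :
    IsCoveringMap Φ := by
  have hloc := h.isLocalHomeomorph hΦ
  have hsep := T2Space.isSeparatedMap Φ
  intro g
  obtain ⟨U, hU, hconn, hg, hcontr⟩ := exists_contraction_of_isManifold E g
  refine isEvenlyCovered_of_exists_section hloc hsep hU hconn hg fun y hy => ?_
  obtain ⟨c, hc, hc', hcU⟩ := hcontr (Φ y) hy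
  refine exists_section_of_path_lifts hloc hsep hy
    ⟨fun q : unitInterval × U => c (q.1, q.2), by fun_prop⟩ (fun u => (hcU u).2.1)
    (fun t => (hcU _).2.2 t rfl) fun u => ?_
  obtain ⟨x, hx, hx₀, hΦx⟩ := h.exists_lift (hc' u) (hcU u).1.symm
  exact ⟨fun t => x t, hx.comp continuous_subtype_val, hx₀, fun t => hΦx t⟩

theorem isHomeomorph [SimplyConnectedSpace G] (h : LiftsLogDeriv Φ ⊤)
    (hΦ : ContMDiff 𝓘(ℝ, E) 𝓘(ℝ, E) 1 Φ) : IsHomeomorph Φ :=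
  have : LocallyPathConnectedSpace G := ChartedSpace.locallyPathConnectedSpace E G
  isHomeomorph_of_isCoveringMap (h.isCoveringMap hΦ)

end LiftsLogDeriv

section LinearAlgebra

theorem exists_clm_apply_eq_one {E : Type*} [NormedAddCommGroup E] [NormedSpace ℝ E]
    [FiniteDimensional ℝ E] {K : Submodule ℝ E} {X : E} (hX : X ∉ K) :
    ∃ l : E →L[ℝ] ℝ, l X = 1 ∧ ∀ v ∈ K, l v = 0 := by
  obtain ⟨f, hfX, hfK⟩ := Submodule.exists_le_ker_of_notMem hX
  exact ⟨LinearMap.toContinuousLinearMap ((f X)⁻¹ • f), by simp [hfX],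
    fun v hv => by simp [LinearMap.mem_ker.1 (hfK hv)]⟩

theorem submodule_chain_induction {R M : Type*} [Ring R] [AddCommGroup M] [Module R M]
    [IsNoetherian R M] {P : Submodule R M → Prop} {A B : Submodule R M} (hAB : A ≤ B) (hA : P A)
    (hstep : ∀ V, A ≤ V → V < B → P V → ∃ X ∈ B, X ∉ V ∧ P (V ⊔ Submodule.span R {X})) : P B := by
  obtain ⟨V, ⟨hAV, hVB, hV⟩, hmax⟩ := (wellFounded_gt (α := Submodule R M)).has_min
    {V | A ≤ V ∧ V ≤ B ∧ P V} ⟨A, le_rfl, hAB, hA⟩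
  rcases hVB.eq_or_lt with rfl | hlt
  · exact hV
  · obtain ⟨X, hXB, hXV, hVX⟩ := hstep V hAV hlt hV
    exact absurd (Submodule.lt_sup_iff_notMem.2 hXV) (hmax _ ⟨le_sup_of_le_left hAV,
      sup_le hVB ((Submodule.span_singleton_le_iff_mem X B).2 hXB), hVX⟩)

theorem lie_mem_derivedSeries_succ {R L : Type*} [CommRing R] [LieRing L] [LieAlgebra R L] {k : ℕ}
    {x y : L} (hx : x ∈ LieAlgebra.derivedSeries R L k) (hy : y ∈ LieAlgebra.derivedSeries R L k) :
    ⁅x, y⁆ ∈ LieAlgebra.derivedSeries R L (k + 1) := by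
  rw [LieAlgebra.derivedSeries_def, LieAlgebra.derivedSeriesOfIdeal_succ]
  exact LieSubmodule.lie_mem_lie hx hy

theorem cartanSubalgebra_sup_derivedSeries_one {K L : Type*} [Field K] [LieRing L] [LieAlgebra K L]
    [FiniteDimensional K L] (H : LieSubalgebra K L) [H.IsCartanSubalgebra] :
    H.toSubmodule ⊔ (LieAlgebra.derivedSeries K L 1).toSubmodule = ⊤ := by
  have hcentral : (LieModule.lowerCentralSeries K H L 1).toSubmodule ≤
      (LieAlgebra.derivedSeries K L 1).toSubmodule := by
    rw [LieModule.lowerCentralSeries_succ, LieSubmodule.lieIdeal_oper_eq_linear_span',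
      Submodule.span_le]
    rintro _ ⟨a, -, b, -, rfl⟩
    exact lie_mem_derivedSeries_succ (x := (a : L)) trivial trivial
  have hfit : LieModule.posFittingComp K H L ≤ LieModule.lowerCentralSeries K H L 1 :=
    (LieModule.posFittingComp_le_iInf_lowerCentralSeries K H L).trans (iInf_le _ 1)
  have hsup := (LieModule.isCompl_genWeightSpace_zero_posFittingComp K H L).sup_eq_top
  change LieAlgebra.rootSpace H 0 ⊔ _ = ⊤ at hsup
  rw [LieAlgebra.rootSpace_zero_eq, ← LieSubmodule.toSubmodule_inj, LieSubmodule.sup_toSubmodule,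
    LieSubmodule.top_toSubmodule] at hsup
  exact top_le_iff.1 (hsup.symm.le.trans (sup_le_sup_left (hcentral.trans' hfit) _))

end LinearAlgebra

section Coordinates

variable {E : Type*} [NormedAddCommGroup E] [NormedSpace ℝ E]
  {G : Type*} [TopologicalSpace G] [ChartedSpace E G] [Group G]
  {L : Type*} [LieRing L] [LieAlgebra ℝ L] {eq : L ≃ₗ[ℝ] E}

theorem apply_mem_integralSubgroup {S : Set L} {X : L} (hX : X ∈ S) {ψ : ℝ → G}
    (hψ : IsOneParamSubgroup ψ (eq X)) (t : ℝ) : ψ t ∈ integralSubgroup (G := G) eq S :=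
  Subgroup.subset_closure ⟨X, hX, ψ, hψ, t, rfl⟩

theorem IsAdCompatible.liftsLogDeriv_appendFactor [LieGroup 𝓘(ℝ, E) 1 G] [FiniteDimensional ℝ E]
    (heq : IsAdCompatible G eq) {Φ : E → G} {V : Submodule ℝ L}
    (h : LiftsLogDeriv Φ (V.map (eq : L →ₗ[ℝ] E))) {l : E →L[ℝ] ℝ} {X : L} (hlX : l (eq X) = 1)
    (hlV : ∀ v ∈ V, l (eq v) = 0) (hV : ∀ y ∈ V, ⁅X, y⁆ ∈ V) {ψ : ℝ → G}
    (hψ : IsOneParamSubgroup ψ (eq X)) :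
    LiftsLogDeriv (appendFactor Φ l (eq X) ψ)
      ((V ⊔ Submodule.span ℝ {X}).map (eq : L →ₗ[ℝ] E)) := by
  rw [Submodule.map_sup, Submodule.map_span, image_singleton]
  refine h.appendFactor_sup_span hlX ?_ hψ (fun t v hv => heq.Ad_mem_map hψ hV t hv)
    (heq.continuous_Ad hψ)
  rintro _ ⟨v, hv, rfl⟩
  exact hlV v hv

theorem exists_clm_comp_apply_eq_one [FiniteDimensional ℝ E] (eq : L ≃ₗ[ℝ] E) {V : Submodule ℝ L}
    {X : L} (hX : X ∉ V) : ∃ l : E →L[ℝ] ℝ, l (eq X) = 1 ∧ ∀ v ∈ V, l (eq v) = 0 := by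
  obtain ⟨l, hlX, hlV⟩ := exists_clm_apply_eq_one (K := V.map (eq : L →ₗ[ℝ] E)) (X := eq X)
    (by simpa using hX)
  exact ⟨l, hlX, fun v hv => hlV _ ⟨v, hv, rfl⟩⟩

/-- The map `Φ` gives coordinates of the second kind on the integral subgroup of `V` which restrict
to such coordinates on the integral subgroup of `H ⊓ V`. The coordinates are taken in the model
space `E`, with which `L` is identified by `eq`. -/
structure AdaptedCoordinates (eq : L ≃ₗ[ℝ] E) (H : LieSubalgebra ℝ L) (V : Submodule ℝ L)
    (Φ : E → G) : Prop where
  contMDiff : ContMDiff 𝓘(ℝ, E) 𝓘(ℝ, E) 1 Φ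
  map_zero : Φ 0 = 1
  lifts : LiftsLogDeriv Φ (V.map (eq : L →ₗ[ℝ] E))
  lifts_inf : LiftsLogDeriv Φ ((H.toSubmodule ⊓ V).map (eq : L →ₗ[ℝ] E))
  mem_integralSubgroup : ∀ x ∈ H.toSubmodule ⊓ V,
    Φ (eq x) ∈ integralSubgroup (G := G) eq (H : Set L)

namespace AdaptedCoordinates

variable {H : LieSubalgebra ℝ L} {V : Submodule ℝ L} {Φ : E → G}

variable (G) in
theorem one_bot (eq : L ≃ₗ[ℝ] E) (H : LieSubalgebra ℝ L) :
    AdaptedCoordinates eq H ⊥ (fun _ => (1 : G)) where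
  contMDiff := contMDiff_const
  map_zero := rfl
  lifts := by simpa using LiftsLogDeriv.one_bot
  lifts_inf := by simpa using LiftsLogDeriv.one_bot
  mem_integralSubgroup _ _ := one_mem _

variable [LieGroup 𝓘(ℝ, E) 1 G] [FiniteDimensional ℝ E] {l : E →L[ℝ] ℝ} {X : L} {ψ : ℝ → G}

theorem appendFactor_of_mem (h : AdaptedCoordinates eq H V Φ) (heq : IsAdCompatible G eq)
    (hlX : l (eq X) = 1) (hlV : ∀ v ∈ V, l (eq v) = 0) (hV : ∀ y ∈ V, ⁅X, y⁆ ∈ V)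
    (hψ : IsOneParamSubgroup ψ (eq X)) (hX : X ∈ H) :
    AdaptedCoordinates eq H (V ⊔ Submodule.span ℝ {X}) (appendFactor Φ l (eq X) ψ) := by
  have hinf : H.toSubmodule ⊓ (V ⊔ Submodule.span ℝ {X}) =
      H.toSubmodule ⊓ V ⊔ Submodule.span ℝ {X} :=
    (inf_sup_assoc_of_le V ((Submodule.span_singleton_le_iff_mem X _).2 hX)).symm
  refine ⟨contMDiff_appendFactor h.contMDiff hψ.contMDiff, ?_,
    heq.liftsLogDeriv_appendFactor h.lifts hlX hlV hV hψ, ?_, ?_⟩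
  · rw [appendFactor_of_apply_eq_zero Φ _ hψ.1 (_root_.map_zero l), h.map_zero]
  · rw [hinf]
    exact heq.liftsLogDeriv_appendFactor h.lifts_inf hlX (fun v hv => hlV v hv.2)
      (fun y hy => ⟨H.lie_mem hX hy.1, hV y hy.2⟩) hψ
  · rw [hinf]
    intro x hx
    obtain ⟨k, hk, _, hy, rfl⟩ := Submodule.mem_sup.1 hx
    obtain ⟨c, rfl⟩ := Submodule.mem_span_singleton.1 hy
    rw [map_add, map_smul, appendFactor_add_smul Φ ψ hlX (hlV k hk.2)]
    exact mul_mem (h.mem_integralSubgroup k hk) (apply_mem_integralSubgroup hX hψ c)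

theorem appendFactor_of_inf_le (h : AdaptedCoordinates eq H V Φ) (heq : IsAdCompatible G eq)
    (hlX : l (eq X) = 1) (hlV : ∀ v ∈ V, l (eq v) = 0) (hV : ∀ y ∈ V, ⁅X, y⁆ ∈ V)
    (hψ : IsOneParamSubgroup ψ (eq X))
    (hHV : H.toSubmodule ⊓ (V ⊔ Submodule.span ℝ {X}) ≤ V) :
    AdaptedCoordinates eq H (V ⊔ Submodule.span ℝ {X}) (appendFactor Φ l (eq X) ψ) := by
  have hinf : H.toSubmodule ⊓ (V ⊔ Submodule.span ℝ {X}) = H.toSubmodule ⊓ V :=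
    le_antisymm (le_inf inf_le_left hHV) (inf_le_inf_left _ le_sup_left)
  have hΦ : ∀ x ∈ V, appendFactor Φ l (eq X) ψ (eq x) = Φ (eq x) := fun x hx =>
    appendFactor_of_apply_eq_zero Φ _ hψ.1 (hlV x hx)
  refine ⟨contMDiff_appendFactor h.contMDiff hψ.contMDiff, ?_,
    heq.liftsLogDeriv_appendFactor h.lifts hlX hlV hV hψ, ?_, ?_⟩
  · rw [appendFactor_of_apply_eq_zero Φ _ hψ.1 (_root_.map_zero l), h.map_zero]
  · rw [hinf]
    refine h.lifts_inf.congr ?_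
    rintro _ ⟨x, hx, rfl⟩
    exact hΦ x hx.2
  · rw [hinf]
    intro x hx
    rw [hΦ x hx.2]
    exact h.mem_integralSubgroup x hx

variable (hexp : ∀ v : E, ∃ ψ : ℝ → G, IsOneParamSubgroup ψ v)

include hexp in
theorem exists_extension (h : AdaptedCoordinates eq H V Φ) (heq : IsAdCompatible G eq)
    {B : Submodule ℝ L} (hVB : V < B) (hB : ∀ x ∈ B, ∀ y ∈ V, ⁅x, y⁆ ∈ V) :
    ∃ X ∈ B, X ∉ V ∧ ∃ Φ' : E → G, AdaptedCoordinates eq H (V ⊔ Submodule.span ℝ {X}) Φ' := by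
  by_cases hHB : H.toSubmodule ⊓ B ≤ V
  · obtain ⟨X, hXB, hXV⟩ := SetLike.exists_of_lt hVB
    obtain ⟨l, hlX, hlV⟩ := exists_clm_comp_apply_eq_one eq hXV
    obtain ⟨ψ, hψ⟩ := hexp (eq X)
    have hle : V ⊔ Submodule.span ℝ {X} ≤ B :=
      sup_le hVB.le ((Submodule.span_singleton_le_iff_mem X B).2 hXB)
    exact ⟨X, hXB, hXV, _, h.appendFactor_of_inf_le heq hlX hlV (hB X hXB) hψ
      ((inf_le_inf_left _ hle).trans hHB)⟩
  · obtain ⟨X, ⟨hXH, hXB⟩, hXV⟩ := SetLike.not_le_iff_exists.1 hHB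
    obtain ⟨l, hlX, hlV⟩ := exists_clm_comp_apply_eq_one eq hXV
    obtain ⟨ψ, hψ⟩ := hexp (eq X)
    exact ⟨X, hXB, hXV, _, h.appendFactor_of_mem heq hlX hlV (hB X hXB) hψ hXH⟩

include hexp in
theorem exists_top [LieAlgebra.IsSolvable L] (heq : IsAdCompatible G eq) (H : LieSubalgebra ℝ L) :
    ∃ Φ : E → G, AdaptedCoordinates eq H ⊤ Φ := by
  have : FiniteDimensional ℝ L := Module.Finite.equiv eq.symm
  let P (V : Submodule ℝ L) : Prop := ∃ Φ : E → G, AdaptedCoordinates eq H V Φ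
  have hderived : ∀ k, P (LieAlgebra.derivedSeries ℝ L k).toSubmodule → P ⊤ := by
    intro k
    induction k with
    | zero => exact id
    | succ k ih =>
      have hle : (LieAlgebra.derivedSeries ℝ L (k + 1)).toSubmodule ≤
          (LieAlgebra.derivedSeries ℝ L k).toSubmodule :=
        LieAlgebra.derivedSeriesOfIdeal_antitone ⊤ k.le_succ
      refine fun hk => ih (submodule_chain_induction hle hk ?_)
      rintro V hV hVB ⟨Φ, hΦ⟩
      exact hΦ.exists_extension hexp heq hVB fun x hx y hy =>
        hV (lie_mem_derivedSeries_succ hx (hVB.le hy))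
  obtain ⟨k, hk⟩ := LieAlgebra.IsSolvable.solvable ℝ L
  refine hderived k ⟨fun _ => 1, ?_⟩
  rw [hk]
  exact one_bot G eq H

theorem isHomeomorph [SimplyConnectedSpace G] (h : AdaptedCoordinates eq H ⊤ Φ) :
    IsHomeomorph Φ :=
  LiftsLogDeriv.isHomeomorph (by simpa using h.lifts) h.contMDiff

theorem simplyConnectedSpace [SimplyConnectedSpace G] (h : AdaptedCoordinates eq H ⊤ Φ) :
    SimplyConnectedSpace (integralSubgroup (G := G) eq (H : Set L)) := by
  set HE := H.toSubmodule.map (eq : L →ₗ[ℝ] E)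
  set e : E ≃ₜ G := h.isHomeomorph.homeomorph Φ
  have hmem : ∀ x, x ∈ HE ↔ e x ∈ integralSubgroup (G := G) eq (H : Set L) := by
    refine fun x => ⟨?_, fun hx => ?_⟩
    · rintro ⟨y, hy, rfl⟩
      exact h.mem_integralSubgroup y ⟨hy, trivial⟩
    · obtain ⟨y, hy, hyx⟩ := h.lifts_inf.integralSubgroup_subset_image h.map_zero
        (fun v hv => ⟨v, ⟨hv, trivial⟩, rfl⟩) hx
      rw [inf_top_eq] at hy
      exact h.isHomeomorph.injective hyx ▸ hy
  have : ContractibleSpace HE := RealTopologicalVectorSpace.contractibleSpace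
  have := (e.subtype hmem).symm.contractibleSpace
  exact .ofContractible _

end AdaptedCoordinates

open Pointwise in
theorem exists_liftsLogDeriv_top_mem_mul [LieGroup 𝓘(ℝ, E) 1 G] [FiniteDimensional ℝ E]
    [LieAlgebra.IsSolvable L] (hexp : ∀ v : E, ∃ ψ : ℝ → G, IsOneParamSubgroup ψ v)
    (heq : IsAdCompatible G eq) {W : Submodule ℝ L} {N : LieSubalgebra ℝ L}
    (hN : ∀ x y : L, ⁅x, y⁆ ∈ N) (hWN : W ⊔ N.toSubmodule = ⊤) :
    ∃ Φ : E → G, ContMDiff 𝓘(ℝ, E) 𝓘(ℝ, E) 1 Φ ∧ LiftsLogDeriv Φ ⊤ ∧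
      ∀ x, Φ x ∈ (integralSubgroup (G := G) eq (N : Set L) : Set G) *
        (integralSubgroup (G := G) eq (W : Set L) : Set G) := by
  have : FiniteDimensional ℝ L := Module.Finite.equiv eq.symm
  let P (V : Submodule ℝ L) : Prop := ∃ Φ : E → G, ContMDiff 𝓘(ℝ, E) 𝓘(ℝ, E) 1 Φ ∧
    LiftsLogDeriv Φ (V.map (eq : L →ₗ[ℝ] E)) ∧
    ∀ x ∈ V, Φ (eq x) ∈ (integralSubgroup (G := G) eq (N : Set L) : Set G) *
      (integralSubgroup (G := G) eq (W : Set L) : Set G)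
  have hP : P ⊤ := by
    refine submodule_chain_induction (A := N.toSubmodule) le_top ?_ ?_
    · obtain ⟨Φ, hΦ⟩ := AdaptedCoordinates.exists_top hexp heq N
      refine ⟨Φ, hΦ.contMDiff, by simpa using hΦ.lifts_inf, fun x hx => ?_⟩
      exact mul_one (Φ (eq x)) ▸ mul_mem_mul (hΦ.mem_integralSubgroup x ⟨hx, trivial⟩) (one_mem _)
    · rintro V hNV hV ⟨Φ, hΦ, hlift, hmem⟩
      have hWV : ¬ W ≤ V := fun h => hV.ne (top_le_iff.1 (hWN ▸ sup_le h hNV))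
      obtain ⟨X, hXW, hXV⟩ := SetLike.not_le_iff_exists.1 hWV
      obtain ⟨l, hlX, hlV⟩ := exists_clm_comp_apply_eq_one eq hXV
      obtain ⟨ψ, hψ⟩ := hexp (eq X)
      refine ⟨X, trivial, hXV, appendFactor Φ l (eq X) ψ, contMDiff_appendFactor hΦ hψ.contMDiff,
        heq.liftsLogDeriv_appendFactor hlift hlX hlV (fun y _ => hNV (hN X y)) hψ, fun x hx => ?_⟩
      obtain ⟨k, hk, _, hy, rfl⟩ := Submodule.mem_sup.1 hx
      obtain ⟨c, rfl⟩ := Submodule.mem_span_singleton.1 hy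
      obtain ⟨n, hn, w, hw, hnw⟩ := hmem k hk
      rw [map_add, map_smul, appendFactor_add_smul Φ ψ hlX (hlV k hk), ← hnw, mul_assoc]
      exact mul_mem_mul hn (mul_mem hw (apply_mem_integralSubgroup hXW hψ c))
  obtain ⟨Φ, hΦ, hlift, hmem⟩ := hP
  exact ⟨Φ, hΦ, by simpa using hlift, eq.surjective.forall.2 fun x => hmem x trivial⟩

theorem exists_eq_mul_of_sup_eq_top [LieGroup 𝓘(ℝ, E) 1 G] [FiniteDimensional ℝ E]
    [SimplyConnectedSpace G] [LieAlgebra.IsSolvable L]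
    (hexp : ∀ v : E, ∃ ψ : ℝ → G, IsOneParamSubgroup ψ v) (heq : IsAdCompatible G eq)
    {W : Submodule ℝ L} {N : LieSubalgebra ℝ L} (hN : ∀ x y : L, ⁅x, y⁆ ∈ N)
    (hWN : W ⊔ N.toSubmodule = ⊤) (g : G) :
    ∃ w ∈ integralSubgroup (G := G) eq (W : Set L),
      ∃ n ∈ integralSubgroup (G := G) eq (N : Set L), g = w * n := by
  obtain ⟨Φ, hΦ, hlift, hmem⟩ := exists_liftsLogDeriv_top_mem_mul hexp heq hN hWN
  obtain ⟨x, hx⟩ := (hlift.isHomeomorph hΦ).surjective g⁻¹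
  obtain ⟨n, hn, w, hw, hnw : n * w = Φ x⟩ := hmem x
  exact ⟨w⁻¹, inv_mem hw, n⁻¹, inv_mem hn, by rw [← mul_inv_rev, hnw, hx, inv_inv]⟩

end Coordinates

theorem cartan_and_derived_subgroups_simply_connected_and_product_general
    {E : Type*} [NormedAddCommGroup E] [NormedSpace ℝ E] [FiniteDimensional ℝ E]
    {G : Type*} [TopologicalSpace G] [Group G] [ChartedSpace E G] [LieGroup 𝓘(ℝ, E) 1 G]
    [SimplyConnectedSpace G] {L : Type*} [LieRing L] [LieAlgebra ℝ L] [LieAlgebra.IsSolvable L]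
    (eq : L ≃ₗ[ℝ] E) (hexp : ∀ v : E, ∃ ψ : ℝ → G, IsOneParamSubgroup ψ v)
    (heq : IsAdCompatible G eq) (𝔴 : LieSubalgebra ℝ L)
    (h𝔴 : 𝔴.toSubmodule ⊔ (LieAlgebra.derivedSeries ℝ L 1).toSubmodule = ⊤) :
    SimplyConnectedSpace ↥(integralSubgroup (G := G) eq (𝔴 : Set L)) ∧
    SimplyConnectedSpace
      ↥(integralSubgroup (G := G) eq ((LieAlgebra.derivedSeries ℝ L 1 : LieIdeal ℝ L) : Set L)) ∧
    ∀ g : G, ∃ w ∈ integralSubgroup (G := G) eq (𝔴 : Set L),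
      ∃ n ∈ integralSubgroup (G := G) eq
        ((LieAlgebra.derivedSeries ℝ L 1 : LieIdeal ℝ L) : Set L), g = w * n := by
  let 𝔫 : LieSubalgebra ℝ L := (LieAlgebra.derivedSeries ℝ L 1).toLieSubalgebra ℝ L
  have hsc (H : LieSubalgebra ℝ L) :
      SimplyConnectedSpace (integralSubgroup (G := G) eq (H : Set L)) :=
    let ⟨_, h⟩ := AdaptedCoordinates.exists_top hexp heq H
    h.simplyConnectedSpace
  exact ⟨hsc 𝔴, hsc 𝔫, exists_eq_mul_of_sup_eq_top hexp heq (W := 𝔴.toSubmodule) (N := 𝔫)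
    (fun x y => lie_mem_derivedSeries_succ (k := 0) trivial trivial) h𝔴⟩

/-- Let `G` be a connected, simply connected solvable Lie group whose Lie algebra is
`L` (identified with the tangent space at the identity via `eq`, compatibly with
one-parameter subgroups and the adjoint action).  If `W` is the connected subgroup
corresponding to a Cartan subalgebra `𝔴` of `L` and `N` is the connected subgroup
corresponding to `𝔫 = [L, L]`, then `W` and `N` are simply connected and `G = WN`. -/
theorem cartan_and_derived_subgroups_simply_connected_and_product
    {E : Type*} [NormedAddCommGroup E] [NormedSpace ℝ E] [FiniteDimensional ℝ E]
    {G : Type*} [TopologicalSpace G] [Group G] [ChartedSpace E G] [LieGroup 𝓘(ℝ, E) (⊤ : ℕ∞) G]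
    [IsTopologicalGroup G] [SimplyConnectedSpace G]
    {L : Type*} [LieRing L] [LieAlgebra ℝ L] [FiniteDimensional ℝ L]
    [LieAlgebra.IsSolvable L]
    (eq : L ≃ₗ[ℝ] E)
    (hexp : ∀ v : E, ∃ ψ : ℝ → G, IsOneParamSubgroup ψ v)
    (hbracket : ∀ (v w : L) (ψ : ℝ → G), IsOneParamSubgroup ψ (eq v) →
      HasDerivAt (fun t : ℝ => AdMap (ψ t) (eq w)) (eq ⁅v, w⁆) 0)
    (𝔴 : LieSubalgebra ℝ L) (h𝔴 : 𝔴.IsCartanSubalgebra) :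
    SimplyConnectedSpace ↥(integralSubgroup (G := G) eq (𝔴 : Set L)) ∧
    SimplyConnectedSpace
      ↥(integralSubgroup (G := G) eq ((LieAlgebra.derivedSeries ℝ L 1 : LieIdeal ℝ L) : Set L)) ∧
    ∀ g : G, ∃ w ∈ integralSubgroup (G := G) eq (𝔴 : Set L),
      ∃ n ∈ integralSubgroup (G := G) eq
        ((LieAlgebra.derivedSeries ℝ L 1 : LieIdeal ℝ L) : Set L), g = w * n := by
  exact cartan_and_derived_subgroups_simply_connected_and_product_general eq hexp hbracket 𝔴
    (cartanSubalgebra_sup_derivedSeries_one 𝔴)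

end
end

section
/- Let M be a group equipped with a right-invariant metric d and a left-invariant Borel measure μ in which every ball has finite measure, and assume μ(M) = ∞. If (M,d,μ) satisfies the Calderón–Zygmund property, then M contains r-doubling sets for arbitrarily large r: for every r₀ > 0 there exist r > r₀ and a measurable set A with 0 < μ(A) < ∞ such that μ(B(e,r)·A) ≤ 2 μ(A). -/
open MeasureTheory Metric Set
open scoped Pointwise

noncomputable section

/-- The Calderón–Zygmund property for a distance function `d` and a Borel measure `μ`. -/
def HasCZProperty {M : Type*} [MeasurableSpace M] (d : M → M → ℝ) (μ : Measure M) : Prop :=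
  ∃ C : ℝ, 0 < C ∧
    ∀ f : M → ℝ, Integrable f μ → ∀ lam : ℝ, 0 < lam →
      ENNReal.ofReal (C * ∫ x, |f x| ∂μ) < ENNReal.ofReal lam * μ Set.univ →
      ∃ (fs : ℕ → M → ℝ) (g : M → ℝ) (Q : ℕ → Set M) (r : ℕ → ℝ) (c : ℕ → M),
        (∀ i, Integrable (fs i) μ) ∧
        (∀ i, MeasurableSet (Q i)) ∧
        (∀ i, 0 < r i) ∧
        (∀ᵐ x ∂μ, f x = (∑' i, fs i x) + g x) ∧
        (∀ i, ∀ x, x ∉ Q i → fs i x = 0) ∧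
        (∀ i, ∫ x, fs i x ∂μ = 0) ∧
        (∀ i, Q i ⊆ {y | d y (c i) < C * r i}) ∧
        (∑' i, μ {y | ∃ q ∈ Q i, d y q < r i}) ≤ ENNReal.ofReal (C * (∫ x, |f x| ∂μ) / lam) ∧
        (∑' i, ENNReal.ofReal (∫ x, |fs i x| ∂μ)) ≤ ENNReal.ofReal (C * ∫ x, |f x| ∂μ) ∧
        (∀ᵐ x ∂μ, |g x| ≤ C * lam)

/-!
Suppose that, at some scale `s`, every open set satisfies `K * μ U ≤ μ (thickening s U)` for a fixed
`K > 1`. Iterating, thickenings grow geometrically, so a cell `Q` of a Calderón–Zygmund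
decomposition with large radius `r` has a thickening of width `r / 2` that is negligible compared
with the thickening of width `r` controlled by the decomposition. Decompose the indicator of a ball
`B` at a small height `lam` and integrate it against a cutoff function `φ` that equals `1` on `B`
and on all cells of large radius, is supported in the `δ`-thickening of their union, and has
Lipschitz constant `δ⁻¹`. The cells of large radius contribute `0` because their bad functions have
mean zero and `φ = 1` there; those of radius much smaller than `δ` contribute little because `φ`
oscillates little on them; those of intermediate radius contribute little once `δ` is chosen by
pigeonhole among `n` geometric scales of ratio `n`; and the good part contributes at most
`C * lam * μ (support φ)`, where `lam` is small and the `δ`-thickening of the large cells has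
measure at most `C * μ B / (n * lam)`. Altogether `n * μ B ≤ (3 * C ^ 2 + 2 * C) * μ B`, which is
absurd for large `n`.
-/

open scoped ENNReal NNReal

section Integral

variable {α ι : Type*} [MeasurableSpace α] {μ : Measure α} [Countable ι]

lemma integrable_tsum_of_tsum_lintegral_enorm_ne_top {u : ι → α → ℝ}
    (hu : ∀ i, AEMeasurable (u i) μ) (hsum : ∑' i, ∫⁻ x, ‖u i x‖ₑ ∂μ ≠ ∞) :
    Integrable (fun x => ∑' i, u i x) μ := by
  refine ⟨(AEMeasurable.tsum hu).aestronglyMeasurable, ?_⟩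
  calc ∫⁻ x, ‖∑' i, u i x‖ₑ ∂μ
      ≤ ∫⁻ x, ∑' i, ‖u i x‖ₑ ∂μ := lintegral_mono fun _ => enorm_tsum_le_tsum_enorm
    _ = ∑' i, ∫⁻ x, ‖u i x‖ₑ ∂μ := lintegral_tsum fun i => (hu i).enorm
    _ < ∞ := hsum.lt_top

lemma enorm_integral_le_tsum_add_lintegral {F G : α → ℝ} {u : ι → α → ℝ}
    (hF : Integrable F μ) (hu : ∀ i, AEMeasurable (u i) μ)
    (hsum : ∑' i, ∫⁻ x, ‖u i x‖ₑ ∂μ ≠ ∞) (hFG : F =ᵐ[μ] fun x => ∑' i, u i x + G x) :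
    ‖∫ x, F x ∂μ‖ₑ ≤ ∑' i, ‖∫ x, u i x ∂μ‖ₑ + ∫⁻ x, ‖G x‖ₑ ∂μ := by
  have hU := integrable_tsum_of_tsum_lintegral_enorm_ne_top hu hsum
  have hG : Integrable G μ := (hF.sub hU).congr <| by
    filter_upwards [hFG] with x hx
    rw [Pi.sub_apply, hx, add_sub_cancel_left]
  calc ‖∫ x, F x ∂μ‖ₑ
      = ‖∑' i, ∫ x, u i x ∂μ + ∫ x, G x ∂μ‖ₑ := by
        rw [integral_congr_ae hFG, integral_add hU hG,
          integral_tsum (fun i => (hu i).aestronglyMeasurable) hsum]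
    _ ≤ ‖∑' i, ∫ x, u i x ∂μ‖ₑ + ‖∫ x, G x ∂μ‖ₑ := enorm_add_le _ _
    _ ≤ ∑' i, ‖∫ x, u i x ∂μ‖ₑ + ∫⁻ x, ‖G x‖ₑ ∂μ :=
        add_le_add enorm_tsum_le_tsum_enorm (enorm_integral_le_lintegral_enorm G)

end Integral

lemma enorm_integral_mul_le_of_integral_eq_zero {M : Type*} [PseudoMetricSpace M]
    [MeasurableSpace M] [OpensMeasurableSpace M] {μ : Measure M} {b φ : M → ℝ} {L ρ : ℝ≥0} {c : M}
    (hb : Integrable b μ) (hb0 : ∫ x, b x ∂μ = 0) (hsupp : Function.support b ⊆ closedBall c ρ)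
    (hφ : LipschitzWith L φ) :
    ‖∫ x, b x * φ x ∂μ‖ₑ ≤ ↑(L * ρ) * ∫⁻ x, ‖b x‖ₑ ∂μ := by
  have hosc : ∀ x, ‖b x * (φ x - φ c)‖ₑ ≤ ↑(L * ρ) * ‖b x‖ₑ := fun x => by
    by_cases hx : b x = 0
    · simp [hx]
    · rw [enorm_mul, mul_comm, ← edist_eq_enorm_sub, ENNReal.coe_mul]
      gcongr
      exact (hφ x c).trans <| by gcongr; simpa [edist_le_coe] using hsupp hx
  have hint : Integrable (fun x => b x * (φ x - φ c)) μ := by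
    refine ⟨hb.1.mul (hφ.continuous.measurable.sub_const _).aestronglyMeasurable,
      (lintegral_mono hosc).trans_lt ?_⟩
    rw [lintegral_const_mul' _ _ ENNReal.coe_ne_top]
    exact ENNReal.mul_lt_top ENNReal.coe_lt_top hb.2
  calc ‖∫ x, b x * φ x ∂μ‖ₑ
      = ‖∫ x, (b x * (φ x - φ c) + b x * φ c) ∂μ‖ₑ := by
        simp only [mul_sub, sub_add_cancel]
    _ = ‖∫ x, b x * (φ x - φ c) ∂μ‖ₑ := by
        rw [integral_add hint (hb.mul_const _), integral_mul_const, hb0, zero_mul, add_zero]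
    _ ≤ ∫⁻ x, ‖b x * (φ x - φ c)‖ₑ ∂μ := enorm_integral_le_lintegral_enorm _
    _ ≤ ∫⁻ x, ↑(L * ρ) * ‖b x‖ₑ ∂μ := lintegral_mono hosc
    _ = ↑(L * ρ) * ∫⁻ x, ‖b x‖ₑ ∂μ := lintegral_const_mul' _ _ ENNReal.coe_ne_top

section Pigeonhole

variable {ι κ : Type*}

lemma exists_card_mul_tsum_indicator_le {s : Finset κ} (hs : s.Nonempty) {S : κ → Set ι}
    (hS : (s : Set κ).PairwiseDisjoint S) (a : ι → ℝ≥0∞) :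
    ∃ j ∈ s, s.card * ∑' i, (S j).indicator a i ≤ ∑' i, a i := by
  obtain ⟨j, hj, hmin⟩ := s.exists_min_image (fun j => ∑' i, (S j).indicator a i) hs
  refine ⟨j, hj, ?_⟩
  calc s.card * ∑' i, (S j).indicator a i
      ≤ ∑ k ∈ s, ∑' i, (S k).indicator a i := by
        rw [← nsmul_eq_mul]
        exact s.card_nsmul_le_sum _ _ hmin
    _ = ∑' i, ∑ k ∈ s, (S k).indicator a i :=
        (Summable.tsum_finsetSum fun _ _ => ENNReal.summable).symm
    _ = ∑' i, (⋃ k ∈ s, S k).indicator a i := by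
        simp only [Finset.indicator_biUnion_apply s S hS]
    _ ≤ ∑' i, a i := ENNReal.tsum_le_tsum fun i => indicator_le_self _ _ i

lemma exists_geometric_scale (ρ : ι → ℝ) (a : ι → ℝ≥0∞) {n : ℕ} (hn : n ≠ 0) (R₀ : ℝ≥0) :
    ∃ R : ℝ≥0, R₀ ≤ R ∧ n * R ≤ n ^ n * R₀ ∧
      n * ∑' i, (ρ ⁻¹' Ico (R : ℝ) ↑(n * R)).indicator a i ≤ ∑' i, a i := by
  have hn1 : (1 : ℝ≥0) ≤ n := mod_cast Nat.one_le_iff_ne_zero.mpr hn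
  set R : ℕ → ℝ≥0 := fun j => n ^ j * R₀
  have hR : Monotone fun j => (R j : ℝ) := fun i j hij => by
    simp only [R]; gcongr
  have hsucc : ∀ j, R (j + 1) = n * R j := fun j => by simp only [R, pow_succ']; ring
  have hdisj : ((Finset.range n : Finset ℕ) : Set ℕ).PairwiseDisjoint
      fun j => ρ ⁻¹' Ico (R j : ℝ) (R (j + 1)) :=
    fun i _ j _ hij => (hR.pairwise_disjoint_on_Ico_succ hij).preimage ρ
  obtain ⟨j, hj, hle⟩ :=
    exists_card_mul_tsum_indicator_le (Finset.nonempty_range_iff.mpr hn) hdisj a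
  refine ⟨R j, ?_, ?_, ?_⟩
  · exact le_mul_of_one_le_left' (one_le_pow₀ hn1)
  · rw [← hsucc]
    exact NNReal.coe_le_coe.mp (hR (Finset.mem_range.mp hj))
  · simpa only [Finset.card_range, hsucc] using hle

end Pigeonhole

section Thickening

lemma ball_one_mul_eq_thickening {M : Type*} [Group M] [PseudoMetricSpace M]
    (hright : ∀ x y g : M, dist (x * g) (y * g) = dist x y) (r : ℝ) (A : Set M) :
    ball (1 : M) r * A = thickening r A := by
  ext x
  simp only [mem_thickening_iff, mem_mul, mem_ball]
  constructor
  · rintro ⟨b, hb, a, ha, rfl⟩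
    exact ⟨a, ha, by rwa [← hright b 1 a, one_mul] at hb⟩
  · rintro ⟨a, ha, hxa⟩
    exact ⟨x * a⁻¹, by rwa [← mul_inv_cancel a, hright], a, ha, inv_mul_cancel_right x a⟩

variable {M : Type*} [PseudoMetricSpace M] [MeasurableSpace M] {μ : Measure M} {K : ℝ≥0∞} {s : ℝ}

lemma pow_mul_measure_thickening_le
    (hgrow : ∀ U : Set M, IsOpen U → K * μ U ≤ μ (thickening s U)) (δ : ℝ) (A : Set M) (k : ℕ) :
    K ^ k * μ (thickening δ A) ≤ μ (thickening (k * s + δ) A) := by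
  induction k with
  | zero => simp
  | succ k ih =>
    calc K ^ (k + 1) * μ (thickening δ A)
        = K * (K ^ k * μ (thickening δ A)) := by rw [pow_succ', mul_assoc]
      _ ≤ K * μ (thickening (k * s + δ) A) := by gcongr
      _ ≤ μ (thickening s (thickening (k * s + δ) A)) := hgrow _ isOpen_thickening
      _ ≤ μ (thickening ((k + 1 : ℕ) * s + δ) A) := by
        refine measure_mono ((thickening_thickening_subset s _ A).trans (thickening_mono ?_ A))
        push_cast
        linarith

end Thickening

/-- A Calderón–Zygmund decomposition of `f` at height `lam` with constant `C`: the decomposition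
produced by `HasCZProperty`, with the sets `Q i`, `r i`, `c i` called cells, radii and centers,
and with all `L¹` norms expressed as Lebesgue integrals in `ℝ≥0∞`. -/
structure CZDecomposition {M : Type*} [PseudoMetricSpace M] [MeasurableSpace M] (μ : Measure M)
    (f : M → ℝ) (C lam : ℝ≥0) where
  bad : ℕ → M → ℝ
  good : M → ℝ
  cell : ℕ → Set M
  radius : ℕ → ℝ
  center : ℕ → M
  integrable_bad : ∀ i, Integrable (bad i) μ
  ae_eq : f =ᵐ[μ] fun x => ∑' i, bad i x + good x
  support_bad_subset : ∀ i, Function.support (bad i) ⊆ cell i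
  integral_bad : ∀ i, ∫ x, bad i x ∂μ = 0
  cell_subset : ∀ i, cell i ⊆ ball (center i) (C * radius i)
  tsum_measure_thickening_le :
    ∑' i, μ (thickening (radius i) (cell i)) ≤ C * (∫⁻ x, ‖f x‖ₑ ∂μ) / lam
  tsum_lintegral_bad_le : ∑' i, ∫⁻ x, ‖bad i x‖ₑ ∂μ ≤ C * ∫⁻ x, ‖f x‖ₑ ∂μ
  enorm_good_le : ∀ᵐ x ∂μ, ‖good x‖ₑ ≤ C * lam

lemma HasCZProperty.exists_czDecomposition {M : Type*} [PseudoMetricSpace M] [MeasurableSpace M]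
    {μ : Measure M} (hCZ : HasCZProperty dist μ) (hinf : μ univ = ∞) :
    ∃ C : ℝ≥0, ∀ f : M → ℝ, Integrable f μ → ∀ lam : ℝ≥0, 0 < lam →
      Nonempty (CZDecomposition μ f C lam) := by
  obtain ⟨C, hC, H⟩ := hCZ
  lift C to ℝ≥0 using hC.le
  refine ⟨C, fun f hf lam hlam => ?_⟩
  have hnorm : ENNReal.ofReal (C * ∫ x, |f x| ∂μ) = C * ∫⁻ x, ‖f x‖ₑ ∂μ := by
    rw [ENNReal.ofReal_mul C.coe_nonneg, ENNReal.ofReal_coe_nnreal]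
    exact congrArg _ (ofReal_integral_norm_eq_lintegral_enorm hf)
  obtain ⟨b, g, Q, r, c, hb, -, -, hfg, hbQ, hb0, hQc, hQ, hbsum, hg⟩ := H f hf lam hlam <| by
    rw [hinf, ENNReal.mul_top (by simpa using hlam.ne')]
    exact ENNReal.ofReal_lt_top
  exact ⟨{
    bad := b, good := g, cell := Q, radius := r, center := c
    integrable_bad := hb
    ae_eq := hfg
    support_bad_subset := fun i => Function.support_subset_iff'.mpr (hbQ i)
    integral_bad := hb0
    cell_subset := hQc
    tsum_measure_thickening_le := by
      rw [ENNReal.ofReal_div_of_pos (mod_cast hlam), hnorm, ENNReal.ofReal_coe_nnreal] at hQ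
      refine (ENNReal.tsum_le_tsum fun i => measure_mono fun y hy => ?_).trans hQ
      exact mem_thickening_iff.mp hy
    tsum_lintegral_bad_le := by
      rw [hnorm] at hbsum
      simpa only [← Real.norm_eq_abs, ofReal_integral_norm_eq_lintegral_enorm (hb _)] using hbsum
    enorm_good_le := by
      filter_upwards [hg] with x hx
      rw [← ENNReal.coe_mul, enorm_le_coe]
      exact hx }⟩

namespace CZDecomposition

variable {M : Type*} [PseudoMetricSpace M] [MeasurableSpace M] {μ : Measure M} {f : M → ℝ}
  {C lam : ℝ≥0}

/-- The union of the cells of radius at least `R`. -/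
def largeCells (d : CZDecomposition μ f C lam) (R : ℝ) : Set M :=
  ⋃ i ∈ {i | R ≤ d.radius i}, d.cell i

lemma pow_mul_measure_thickening_largeCells_le (d : CZDecomposition μ f C lam) {K : ℝ≥0∞}
    {s δ R : ℝ} (hgrow : ∀ U : Set M, IsOpen U → K * μ U ≤ μ (thickening s U)) {k : ℕ}
    (hR : k * s + δ ≤ R) :
    K ^ k * μ (thickening δ (d.largeCells R)) ≤ C * (∫⁻ x, ‖f x‖ₑ ∂μ) / lam := by
  let I := {i | R ≤ d.radius i}
  calc K ^ k * μ (thickening δ (d.largeCells R))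
      ≤ K ^ k * ∑' i : I, μ (thickening δ (d.cell i)) := by
        rw [largeCells, thickening_biUnion]
        gcongr
        exact measure_biUnion_le μ I.to_countable _
    _ = ∑' i : I, K ^ k * μ (thickening δ (d.cell i)) := ENNReal.tsum_mul_left.symm
    _ ≤ ∑' i : I, μ (thickening (d.radius i) (d.cell i)) :=
        ENNReal.tsum_le_tsum fun i => (pow_mul_measure_thickening_le hgrow δ _ k).trans <|
          measure_mono (thickening_mono (hR.trans i.2) _)
    _ ≤ ∑' i, μ (thickening (d.radius i) (d.cell i)) :=
        ENNReal.tsum_comp_le_tsum_of_injective Subtype.val_injective _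
    _ ≤ C * (∫⁻ x, ‖f x‖ₑ ∂μ) / lam := d.tsum_measure_thickening_le

lemma mul_measure_thickening_union_largeCells_le (d : CZDecomposition μ f C lam) {K n : ℝ≥0∞}
    {s δ R : ℝ} (hgrow : ∀ U : Set M, IsOpen U → K * μ U ≤ μ (thickening s U)) {k : ℕ}
    (hnk : n ≤ K ^ k) (hR : k * s + δ ≤ R) (B : Set M) :
    lam * (n * μ (thickening δ (B ∪ d.largeCells R))) ≤
      lam * (n * μ (thickening δ B)) + C * ∫⁻ x, ‖f x‖ₑ ∂μ :=
  calc lam * (n * μ (thickening δ (B ∪ d.largeCells R)))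
      ≤ lam * (n * (μ (thickening δ B) + μ (thickening δ (d.largeCells R)))) := by
        rw [thickening_union]
        gcongr
        exact measure_union_le _ _
    _ ≤ lam * (n * μ (thickening δ B)) + lam * (K ^ k * μ (thickening δ (d.largeCells R))) := by
        rw [mul_add, mul_add]
        gcongr
    _ ≤ lam * (n * μ (thickening δ B)) + lam * (C * (∫⁻ x, ‖f x‖ₑ ∂μ) / lam) := by
        gcongr
        exact d.pow_mul_measure_thickening_largeCells_le hgrow hR
    _ ≤ lam * (n * μ (thickening δ B)) + C * ∫⁻ x, ‖f x‖ₑ ∂μ :=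
        add_le_add_right ENNReal.mul_div_le _

variable [OpensMeasurableSpace M] {φ : M → ℝ} {L : ℝ≥0}

lemma enorm_integral_bad_mul_le (d : CZDecomposition μ f C lam) (hφ : LipschitzWith L φ)
    (hφ1 : ∀ x, ‖φ x‖ₑ ≤ 1) {R R' : ℝ≥0} (hlarge : ∀ x ∈ d.largeCells R', φ x = 1) (i : ℕ) :
    ‖∫ x, d.bad i x * φ x ∂μ‖ₑ ≤ ↑(L * (C * R)) * ∫⁻ x, ‖d.bad i x‖ₑ ∂μ +
      (d.radius ⁻¹' Ico (R : ℝ) R').indicator (fun i => ∫⁻ x, ‖d.bad i x‖ₑ ∂μ) i := by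
  rcases lt_or_ge (d.radius i) R with hsmall | hR
  · refine le_add_right <| enorm_integral_mul_le_of_integral_eq_zero (d.integrable_bad i)
      (d.integral_bad i) (((d.support_bad_subset i).trans (d.cell_subset i)).trans
        (ball_subset_closedBall.trans (closedBall_subset_closedBall ?_))) hφ
    push_cast
    gcongr
  rcases lt_or_ge (d.radius i) R' with hR' | hlarge_i
  · rw [indicator_of_mem (show i ∈ d.radius ⁻¹' Ico (R : ℝ) R' from ⟨hR, hR'⟩)]
    refine le_add_left ((enorm_integral_le_lintegral_enorm _).trans (lintegral_mono fun x => ?_))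
    rw [enorm_mul]
    exact mul_le_of_le_one_right' (hφ1 x)
  · have hone : ∀ x, d.bad i x * φ x = d.bad i x := fun x => by
      by_cases hx : d.bad i x = 0
      · simp [hx]
      · rw [hlarge x (mem_biUnion hlarge_i (d.support_bad_subset i hx)), mul_one]
    simp [hone, d.integral_bad i]

lemma lintegral_good_mul_le (d : CZDecomposition μ f C lam) (hφ : Continuous φ)
    (hφ1 : ∀ x, ‖φ x‖ₑ ≤ 1) :
    ∫⁻ x, ‖d.good x * φ x‖ₑ ∂μ ≤ C * lam * μ (Function.support φ) := by
  rw [← lintegral_indicator_const hφ.isOpen_support.measurableSet]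
  refine lintegral_mono_ae ?_
  filter_upwards [d.enorm_good_le] with x hx
  by_cases hφx : φ x = 0
  · simp [hφx]
  · rw [indicator_of_mem (Function.mem_support.mpr hφx), enorm_mul]
    exact (mul_le_of_le_one_right' (hφ1 x)).trans hx

lemma enorm_integral_mul_le (d : CZDecomposition μ f C lam) (hf : Integrable f μ)
    (hφ : LipschitzWith L φ) (hφ1 : ∀ x, ‖φ x‖ₑ ≤ 1) {R R' : ℝ≥0}
    (hlarge : ∀ x ∈ d.largeCells R', φ x = 1) :
    ‖∫ x, f x * φ x ∂μ‖ₑ ≤ ↑(L * (C * R)) * ∑' i, ∫⁻ x, ‖d.bad i x‖ₑ ∂μ +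
      ∑' i, (d.radius ⁻¹' Ico (R : ℝ) R').indicator (fun i => ∫⁻ x, ‖d.bad i x‖ₑ ∂μ) i +
      C * lam * μ (Function.support φ) := by
  have hφm : Measurable φ := hφ.continuous.measurable
  have hmul_le : ∀ (u : M → ℝ) x, ‖u x * φ x‖ₑ ≤ ‖u x‖ₑ := fun u x => by
    rw [enorm_mul]
    exact mul_le_of_le_one_right' (hφ1 x)
  have hfφ : Integrable (fun x => f x * φ x) μ :=
    ⟨hf.1.mul hφm.aestronglyMeasurable, (lintegral_mono (hmul_le f)).trans_lt hf.2⟩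
  have hsum : ∑' i, ∫⁻ x, ‖d.bad i x * φ x‖ₑ ∂μ ≠ ∞ := by
    refine ne_top_of_le_ne_top (ENNReal.mul_ne_top ENNReal.coe_ne_top hf.2.ne) <|
      (ENNReal.tsum_le_tsum fun i => lintegral_mono (hmul_le (d.bad i))).trans
        d.tsum_lintegral_bad_le
  have hsplit : (fun x => f x * φ x) =ᵐ[μ] fun x => ∑' i, d.bad i x * φ x + d.good x * φ x := by
    filter_upwards [d.ae_eq] with x hx
    rw [hx, add_mul, tsum_mul_right]
  calc ‖∫ x, f x * φ x ∂μ‖ₑ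
      ≤ ∑' i, ‖∫ x, d.bad i x * φ x ∂μ‖ₑ + ∫⁻ x, ‖d.good x * φ x‖ₑ ∂μ :=
        enorm_integral_le_tsum_add_lintegral hfφ
          (fun i => (d.integrable_bad i).aemeasurable.mul hφm.aemeasurable) hsum hsplit
    _ ≤ _ := by
        rw [← ENNReal.tsum_mul_left, ← ENNReal.tsum_add]
        exact add_le_add (ENNReal.tsum_le_tsum (d.enorm_integral_bad_mul_le hφ hφ1 hlarge))
          (d.lintegral_good_mul_le hφ.continuous hφ1)

lemma enorm_integral_le (d : CZDecomposition μ f C lam) (hf : Integrable f μ) {B : Set M}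
    (hB : Function.support f ⊆ B) {δ : ℝ≥0} (hδ : 0 < δ) (R R' : ℝ≥0) :
    ‖∫ x, f x ∂μ‖ₑ ≤ ↑(δ⁻¹ * (C * R)) * ∑' i, ∫⁻ x, ‖d.bad i x‖ₑ ∂μ +
      ∑' i, (d.radius ⁻¹' Ico (R : ℝ) R').indicator (fun i => ∫⁻ x, ‖d.bad i x‖ₑ ∂μ) i +
      C * lam * μ (thickening δ (B ∪ d.largeCells R')) := by
  have hδ' : (0 : ℝ) < δ := hδ
  set E := B ∪ d.largeCells R'
  set φ : M → ℝ := fun x => thickenedIndicator hδ' E x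
  have hφ : LipschitzWith δ⁻¹ φ := by
    have h := lipschitzWith_thickenedIndicator hδ' E
    rw [Real.toNNReal_coe] at h
    exact h
  have hφ1 : ∀ x, ‖φ x‖ₑ ≤ 1 := fun x => by
    simpa [φ] using thickenedIndicator_le_one hδ' E x
  have hφE : ∀ x ∈ E, φ x = 1 := fun x hx =>
    congrArg NNReal.toReal (thickenedIndicator_one hδ' E hx)
  have hsupp : Function.support φ ⊆ thickening δ E := Function.support_subset_iff'.mpr fun x hx =>
    congrArg NNReal.toReal (thickenedIndicator_zero hδ' E hx)
  have hfφ : ∀ x, f x * φ x = f x := fun x => by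
    by_cases hx : f x = 0
    · simp [hx]
    · rw [hφE x (.inl (hB hx)), mul_one]
  have key := d.enorm_integral_mul_le hf hφ hφ1 (R := R) (R' := R') fun x hx => hφE x (.inr hx)
  simp only [hfφ] at key
  exact key.trans (by gcongr)

lemma exists_scale_mul_enorm_integral_le (d : CZDecomposition μ f C lam) (hf : Integrable f μ)
    {B : Set M} (hB : Function.support f ⊆ B) {n : ℕ} (hn : n ≠ 0) {R₀ : ℝ≥0} (hR₀ : 0 < R₀) :
    ∃ δ : ℝ≥0, R₀ ≤ δ ∧ δ ≤ n ^ n * R₀ ∧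
      n * ‖∫ x, f x ∂μ‖ₑ ≤ (2 * C ^ 2 + C) * ∫⁻ x, ‖f x‖ₑ ∂μ +
        C * (lam * (n * μ (thickening δ (B ∪ d.largeCells (2 * δ))))) := by
  set S := ∑' i, ∫⁻ x, ‖d.bad i x‖ₑ ∂μ
  obtain ⟨R, hR₀R, hRn, hmedium⟩ := exists_geometric_scale d.radius
    (fun i => ∫⁻ x, ‖d.bad i x‖ₑ ∂μ) hn (2 * R₀)
  set δ : ℝ≥0 := n * R / 2
  have hδR : n * R = 2 * δ := (mul_div_cancel₀ _ two_ne_zero).symm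
  have hn1 : (1 : ℝ≥0) ≤ n := mod_cast Nat.one_le_iff_ne_zero.mpr hn
  have hR₀δ : R₀ ≤ δ := le_of_mul_le_mul_left
    (hδR ▸ hR₀R.trans (le_mul_of_one_le_left' hn1)) two_pos
  have hδn : δ ≤ n ^ n * R₀ := le_of_mul_le_mul_left
    (by rwa [← hδR, mul_left_comm]) two_pos
  have hδ : 0 < δ := hR₀.trans_le hR₀δ
  rw [hδR] at hmedium
  set T := ∑' i, (d.radius ⁻¹' Ico (R : ℝ) ↑(2 * δ)).indicator
    (fun i => ∫⁻ x, ‖d.bad i x‖ₑ ∂μ) i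
  set V := μ (thickening δ (B ∪ d.largeCells (2 * δ)))
  have hsmall : n * (δ⁻¹ * (C * R)) = 2 * C := by
    rw [show n * (δ⁻¹ * (C * R)) = n * R * δ⁻¹ * C by ring, hδR, mul_inv_cancel_right₀ hδ.ne']
  refine ⟨δ, hR₀δ, hδn, ?_⟩
  calc n * ‖∫ x, f x ∂μ‖ₑ
      ≤ n * (↑(δ⁻¹ * (C * R)) * S + T + C * lam * V) := by
        gcongr
        exact d.enorm_integral_le hf hB hδ R (2 * δ)
    _ = ↑(n * (δ⁻¹ * (C * R))) * S + n * T + C * (lam * (n * V)) := by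
        push_cast
        ring
    _ ≤ ↑(n * (δ⁻¹ * (C * R))) * S + S + C * (lam * (n * V)) := by gcongr
    _ = (2 * C + 1) * S + C * (lam * (n * V)) := by
        rw [hsmall]
        push_cast
        ring
    _ ≤ (2 * C + 1) * (C * ∫⁻ x, ‖f x‖ₑ ∂μ) + C * (lam * (n * V)) := by
        gcongr
        exact d.tsum_lintegral_bad_le
    _ = (2 * C ^ 2 + C) * ∫⁻ x, ‖f x‖ₑ ∂μ + C * (lam * (n * V)) := by ring

lemma mul_enorm_integral_le (d : CZDecomposition μ f C lam) (hf : Integrable f μ) {B : Set M}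
    (hB : Function.support f ⊆ B) {K : ℝ≥0∞} {s : ℝ} {R₀ : ℝ≥0}
    (hgrow : ∀ U : Set M, IsOpen U → K * μ U ≤ μ (thickening s U)) {n k : ℕ} (hn : n ≠ 0)
    (hnk : n ≤ K ^ k) (hR₀ : 0 < R₀) (hk : k * s ≤ R₀) :
    n * ‖∫ x, f x ∂μ‖ₑ ≤ (3 * C ^ 2 + C) * ∫⁻ x, ‖f x‖ₑ ∂μ +
      C * (lam * (n * μ (thickening ↑(n ^ n * R₀) B))) := by
  obtain ⟨δ, hR₀δ, hδn, hle⟩ := d.exists_scale_mul_enorm_integral_le hf hB hn hR₀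
  have hkδ : k * s + δ ≤ 2 * δ := by
    rw [two_mul]
    gcongr
    exact hk.trans (NNReal.coe_le_coe.mpr hR₀δ)
  calc n * ‖∫ x, f x ∂μ‖ₑ
      ≤ (2 * C ^ 2 + C) * ∫⁻ x, ‖f x‖ₑ ∂μ +
          C * (lam * (n * μ (thickening δ (B ∪ d.largeCells (2 * δ))))) := hle
    _ ≤ (2 * C ^ 2 + C) * ∫⁻ x, ‖f x‖ₑ ∂μ +
          C * (lam * (n * μ (thickening δ B)) + C * ∫⁻ x, ‖f x‖ₑ ∂μ) :=
        add_le_add_right (mul_le_mul_right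
          (d.mul_measure_thickening_union_largeCells_le hgrow hnk hkδ B) _) _
    _ = (3 * C ^ 2 + C) * ∫⁻ x, ‖f x‖ₑ ∂μ + C * (lam * (n * μ (thickening δ B))) := by ring
    _ ≤ (3 * C ^ 2 + C) * ∫⁻ x, ‖f x‖ₑ ∂μ +
          C * (lam * (n * μ (thickening ↑(n ^ n * R₀) B))) := by gcongr

lemma mul_measure_le {B : Set M} (d : CZDecomposition μ (B.indicator 1) C lam)
    (hB : MeasurableSet B) (hμB : μ B < ∞) {K : ℝ≥0∞} {s : ℝ} {R₀ : ℝ≥0}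
    (hgrow : ∀ U : Set M, IsOpen U → K * μ U ≤ μ (thickening s U)) {n k : ℕ} (hn : n ≠ 0)
    (hnk : n ≤ K ^ k) (hR₀ : 0 < R₀) (hk : k * s ≤ R₀)
    (hlam : lam * (n * μ (thickening ↑(n ^ n * R₀) B)) ≤ μ B) :
    n * μ B ≤ ((3 * C ^ 2 + 2 * C : ℝ≥0) : ℝ≥0∞) * μ B := by
  have hf : Integrable (B.indicator (1 : M → ℝ)) μ :=
    (integrable_indicator_iff hB).mpr (integrableOn_const hμB.ne enorm_ne_top)
  have hnorm : ∫⁻ x, ‖B.indicator (1 : M → ℝ) x‖ₑ ∂μ = μ B := by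
    simp [enorm_indicator_eq_indicator_enorm, hB]
  have hint : ‖∫ x, B.indicator (1 : M → ℝ) x ∂μ‖ₑ = μ B := by
    rw [integral_indicator_one hB, Real.enorm_of_nonneg measureReal_nonneg,
      ofReal_measureReal hμB.ne]
  calc n * μ B
      ≤ (3 * C ^ 2 + C) * μ B + C * (lam * (n * μ (thickening ↑(n ^ n * R₀) B))) := by
        simpa only [hint, hnorm] using
          d.mul_enorm_integral_le hf support_indicator_subset hgrow hn hnk hR₀ hk
    _ ≤ (3 * C ^ 2 + C) * μ B + C * μ B := by gcongr
    _ = ((3 * C ^ 2 + 2 * C : ℝ≥0) : ℝ≥0∞) * μ B := by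
        push_cast
        ring

end CZDecomposition

lemma HasCZProperty.exists_isOpen_measure_thickening_lt {M : Type*} [PseudoMetricSpace M]
    [MeasurableSpace M] [OpensMeasurableSpace M] {μ : Measure M}
    (hCZ : HasCZProperty dist μ) (hballs : ∀ (x : M) (r : ℝ), μ (ball x r) < ∞)
    (hinf : μ univ = ∞) {K : ℝ≥0∞} (hK : 1 < K) (s : ℝ) :
    ∃ U : Set M, IsOpen U ∧ μ (thickening s U) < K * μ U := by
  by_contra! hgrow
  obtain ⟨C, hdecomp⟩ := hCZ.exists_czDecomposition hinf
  obtain ⟨n, hn⟩ := exists_nat_gt (3 * C ^ 2 + 2 * C)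
  have hn0 : n ≠ 0 := Nat.cast_ne_zero.mp (pos_of_gt hn).ne'
  obtain ⟨k, hk⟩ := ((ENNReal.tendsto_pow_atTop_nhds_top_iff.mpr hK).eventually_const_le
    (ENNReal.natCast_lt_top n)).exists
  have : NeZero μ := ⟨fun h => by simp [h] at hinf⟩
  obtain ⟨o⟩ := μ.nonempty_of_neZero
  obtain ⟨ρ, hρ⟩ := exists_pos_ball o (NeZero.ne μ)
  set B := ball o ρ
  have hB : μ B < ∞ := hballs o ρ
  set R₀ : ℝ≥0 := (k * s).toNNReal + 1
  have hV : μ (thickening ↑(n ^ n * R₀) B) < ∞ :=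
    (measure_mono (thickening_ball _ _ _)).trans_lt (hballs o _)
  obtain ⟨lam, hlam, hlamV⟩ := ENNReal.exists_nnreal_pos_mul_lt
    (ENNReal.mul_ne_top (ENNReal.natCast_ne_top n) hV.ne) hρ.ne'
  have hf : Integrable (B.indicator (1 : M → ℝ)) μ :=
    (integrable_indicator_iff measurableSet_ball).mpr (integrableOn_const hB.ne enorm_ne_top)
  obtain ⟨d⟩ := hdecomp _ hf lam hlam
  have hks : k * s ≤ R₀ := (Real.le_coe_toNNReal _).trans (NNReal.coe_le_coe.mpr le_self_add)
  have hmass := d.mul_measure_le measurableSet_ball hB hgrow hn0 hk (by positivity) hks hlamV.le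
  exact hn.not_ge (mod_cast (ENNReal.mul_le_mul_iff_left hρ.ne' hB.ne).mp hmass)

theorem czProperty_implies_doubling_sets_general {M : Type*} [PseudoMetricSpace M]
    [MeasurableSpace M] [OpensMeasurableSpace M] (μ : Measure M) (hμ : μ ≠ 0)
    (hballs : ∀ (x : M) (r : ℝ), μ (ball x r) < ∞) (hCZ : HasCZProperty dist μ)
    {K : ℝ≥0∞} (hK : 1 < K) (r : ℝ) :
    ∃ U : Set M, IsOpen U ∧ 0 < μ U ∧ μ U < ∞ ∧ μ (thickening r U) ≤ K * μ U := by
  rcases eq_or_ne (μ univ) ∞ with hinf | hfin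
  · obtain ⟨U, hU, hlt⟩ := hCZ.exists_isOpen_measure_thickening_lt hballs hinf hK (max r 1)
    have hpos : 0 < μ U := pos_iff_ne_zero.mpr (right_ne_zero_of_mul (pos_of_gt hlt).ne')
    have hself : U ⊆ thickening (max r 1) U := self_subset_thickening (by positivity) U
    exact ⟨U, hU, hpos, (measure_mono hself).trans_lt hlt.lt_top,
      (measure_mono (thickening_mono (le_max_left r 1) U)).trans hlt.le⟩
  · exact ⟨univ, isOpen_univ, Measure.measure_univ_pos.mpr hμ, hfin.lt_top,
      (measure_mono (subset_univ _)).trans (le_mul_of_one_le_left' hK.le)⟩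

/-- If a group `M` with a right-invariant metric and a left-invariant Borel measure of
infinite total mass satisfies the Calderón–Zygmund property, then `M` contains
`r`-doubling sets for arbitrarily large `r`. -/
theorem czProperty_implies_doubling_sets
    {M : Type*} [Group M] [MetricSpace M] [MeasurableSpace M] [BorelSpace M]
    (μ : Measure M)
    (hright : ∀ x y g : M, dist (x * g) (y * g) = dist x y)
    (hleft : ∀ (g : M) (A : Set M), μ ((fun x => g * x) ⁻¹' A) = μ A)
    (hballs : ∀ (x : M) (r : ℝ), μ (ball x r) < ⊤)
    (hinf : μ Set.univ = ⊤)
    (hCZ : HasCZProperty dist μ) :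
    ∀ r₀ : ℝ, 0 < r₀ → ∃ r : ℝ, r₀ < r ∧ ∃ A : Set M, MeasurableSet A ∧
      0 < μ A ∧ μ A < ⊤ ∧ μ (ball (1 : M) r * A) ≤ 2 * μ A := by
  intro r₀ _
  have hμ : μ ≠ 0 := fun h => by simp [h] at hinf
  obtain ⟨A, hA, hpos, hfin, hdoubling⟩ :=
    czProperty_implies_doubling_sets_general μ hμ hballs hCZ ENNReal.one_lt_two (r₀ + 1)
  exact ⟨r₀ + 1, lt_add_one r₀, A, hA.measurableSet, hpos, hfin,
    by rwa [ball_one_mul_eq_thickening hright]⟩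

end
end
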